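/- arXiv:2504.03211 — 2 statements merged into one kernel-verified Lean document; each statement's English description precedes it below -/
import Mathlib

section
/- In the event-independent setting (U_i = U for all i), for any ε ≥ 0 and t ≥ 1, the supremum of V(f) over all finitely supported (ε,ℓ_t)-calibrated predictors f equals OPT(LP-TwoStep), the optimal value of the program LP-TwoStep. -/
open Finset

noncomputable section

namespace PersuasiveCalibration

/-- The environment of the persuasive calibration problem: `n` events with
probabilities `lam i > 0` summing to one and sorted expected outcomes `theta i ∈ [0,1]`. -/
structure Setup (n : ℕ) : Type where
  lam : Fin n → ℝ
  theta : Fin n → ℝ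
  lam_pos : ∀ i, 0 < lam i
  lam_sum : ∑ i, lam i = 1
  theta_mono : Monotone theta
  theta_mem : ∀ i, theta i ∈ Set.Icc (0 : ℝ) 1

variable {n : ℕ}

/-- A finitely supported probability distribution on `[0,1]`. -/
def IsDist (μ : ℝ →₀ ℝ) : Prop :=
  (∀ p, 0 ≤ μ p) ∧ (∀ p ∈ μ.support, p ∈ Set.Icc (0 : ℝ) 1) ∧ (∑ p ∈ μ.support, μ p) = 1

/-- A predictor assigns to each event a finitely supported probability distribution on `[0,1]`. -/
def IsPredictor (f : Fin n → ℝ →₀ ℝ) : Prop := ∀ i, IsDist (f i)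

/-- The (unconditional) prediction space of a predictor. -/
def suppF (f : Fin n → ℝ →₀ ℝ) : Finset ℝ := Finset.univ.biUnion fun i => (f i).support

/-- The marginalized predictor `f(p) = ∑ i, λ i * f i p`. -/
def marginal (S : Setup n) (f : Fin n → ℝ →₀ ℝ) (p : ℝ) : ℝ := ∑ i, S.lam i * f i p

/-- The true expected outcome conditional on the prediction `p`. -/
def kappa (S : Setup n) (f : Fin n → ℝ →₀ ℝ) (p : ℝ) : ℝ :=
  (∑ i, S.lam i * f i p * S.theta i) / marginal S f p

/-- The `ℓ_t`-norm expected calibration error of a predictor. -/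
def ECE (S : Setup n) (t : ℝ) (f : Fin n → ℝ →₀ ℝ) : ℝ :=
  (∑ p ∈ suppF f, marginal S f p * |kappa S f p - p| ^ t) ^ (1 / t)

/-- The principal's expected payoff from predictor `f` with indirect utilities `U i`. -/
def payoff (S : Setup n) (U : Fin n → ℝ → ℝ) (f : Fin n → ℝ →₀ ℝ) : ℝ :=
  ∑ i, S.lam i * ∑ p ∈ (f i).support, f i p * U i p

/-- The principal's payoff in the event-independent setting. -/
def payoffEI (S : Setup n) (U : ℝ → ℝ) (f : Fin n → ℝ →₀ ℝ) : ℝ :=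
  payoff S (fun _ => U) f

/-- A predictor is perfectly calibrated if `κ(q) = q` on its support. -/
def PerfectlyCalibrated (S : Setup n) (g : Fin n → ℝ →₀ ℝ) : Prop :=
  ∀ q ∈ suppF g, kappa S g q = q

/-- An event-independent post-processing plan: a finitely supported probability
distribution on `[0,1] × [0,1]`; the first coordinate is `q`, the second is `p`. -/
def IsPlan (χ : ℝ × ℝ →₀ ℝ) : Prop :=
  (∀ x, 0 ≤ χ x) ∧ (∀ x ∈ χ.support, x.1 ∈ Set.Icc (0 : ℝ) 1 ∧ x.2 ∈ Set.Icc (0 : ℝ) 1) ∧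
    (∑ x ∈ χ.support, χ x) = 1

/-- The `ℓ_t` calibration cost `∑ χ(q,p) |q - p|^t` of a plan. -/
def planCost (t : ℝ) (χ : ℝ × ℝ →₀ ℝ) : ℝ := ∑ x ∈ χ.support, χ x * |x.1 - x.2| ^ t

/-- The `q`-marginal `∑_p χ(q, p)` of a plan. -/
def planMargQ (χ : ℝ × ℝ →₀ ℝ) (q : ℝ) : ℝ :=
  ∑ x ∈ χ.support.filter fun x => x.1 = q, χ x

/-- Feasibility of a post-processing plan for a perfectly calibrated predictor `g` and
an `ℓ_t` ECE budget `ε`. -/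
def FeasiblePlan (S : Setup n) (t ε : ℝ) (g : Fin n → ℝ →₀ ℝ) (χ : ℝ × ℝ →₀ ℝ) : Prop :=
  planCost t χ ≤ ε ^ t ∧ ∀ q, planMargQ χ q = marginal S g q

/-- The value `f_i(p) = ∑_q (g̃_i(q)/g(q)) χ(q,p)` of the predictor generated by `(g̃, χ)`. -/
def genVal (S : Setup n) (g : Fin n → ℝ →₀ ℝ) (χ : ℝ × ℝ →₀ ℝ) (i : Fin n) (p : ℝ) : ℝ :=
  ∑ q ∈ suppF g, g i q / marginal S g q * χ (q, p)

/-- A predictor generated by some perfectly calibrated predictor and some feasible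
event-independent post-processing plan. -/
def IsGenerated (S : Setup n) (t ε : ℝ) (f : Fin n → ℝ →₀ ℝ) : Prop :=
  ∃ (g : Fin n → ℝ →₀ ℝ) (χ : ℝ × ℝ →₀ ℝ),
    IsPredictor g ∧ PerfectlyCalibrated S g ∧ IsPlan χ ∧ FeasiblePlan S t ε g χ ∧
      ∀ i p, f i p = genVal S g χ i p

/-- The CDF of a finitely supported distribution. -/
def cdf (μ : ℝ →₀ ℝ) (x : ℝ) : ℝ := ∑ q ∈ μ.support.filter fun q => q ≤ x, μ q

/-- The CDF of the distribution placing mass `λ_i` at `θ_i`. -/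
def priorCdf (S : Setup n) (x : ℝ) : ℝ :=
  ∑ i ∈ Finset.univ.filter fun i => S.theta i ≤ x, S.lam i

/-- `μ` is a mean-preserving contraction of the distribution putting mass `λ_i` on `θ_i`. -/
def MPCprior (S : Setup n) (μ : ℝ →₀ ℝ) : Prop :=
  (∀ s ∈ Set.Icc (0 : ℝ) 1,
      (∫ x in (0 : ℝ)..s, cdf μ x) ≤ ∫ x in (0 : ℝ)..s, priorCdf S x) ∧
    (∫ x in (0 : ℝ)..(1 : ℝ), cdf μ x) = ∫ x in (0 : ℝ)..(1 : ℝ), priorCdf S x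

/-- The objective `∑ χ(q,p) U(p)` of the program LP-TwoStep. -/
def LPobj (U : ℝ → ℝ) (χ : ℝ × ℝ →₀ ℝ) : ℝ := ∑ x ∈ χ.support, χ x * U x.2

/-- Feasibility for the program LP-TwoStep. -/
def LPFeasible (S : Setup n) (ε t : ℝ) (χ : ℝ × ℝ →₀ ℝ) (g : ℝ →₀ ℝ) : Prop :=
  (∀ x, 0 ≤ χ x) ∧
  (∀ x ∈ χ.support, x.1 ∈ Set.Icc (0 : ℝ) 1 ∧ x.2 ∈ Set.Icc (0 : ℝ) 1) ∧
  planCost t χ ≤ ε ^ t ∧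
  (∀ q, planMargQ χ q = g q) ∧ IsDist g ∧ MPCprior S g

/-- The optimal value of LP-TwoStep. -/
def OPTLP (S : Setup n) (ε t : ℝ) (U : ℝ → ℝ) : ℝ :=
  sSup {v | ∃ (χ : ℝ × ℝ →₀ ℝ) (g : ℝ →₀ ℝ), LPFeasible S ε t χ g ∧ v = LPobj U χ}

/-- Symmetric linear-tailed convex function with linear tails `[0, xL]`, `[xH, 1]` and
tail slopes `s1`, `s2` of equal absolute value. -/
def SymLinTailedConvex (Γ : ℝ → ℝ) (xL xH s1 s2 : ℝ) : Prop :=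
  ConvexOn ℝ (Set.Icc (0 : ℝ) 1) Γ ∧ 0 ≤ xL ∧ xL ≤ xH ∧ xH ≤ 1 ∧ |s1| = |s2| ∧
    (∃ c1, ∀ x ∈ Set.Icc (0 : ℝ) xL, Γ x = c1 + s1 * x) ∧
    (∃ c2, ∀ x ∈ Set.Icc xH (1 : ℝ), Γ x = c2 + s2 * x)

/-- Tuples `(i, j, q, p)` indexing a bi-event post-processing plan. -/
abbrev BiTuple (n : ℕ) := Fin n × Fin n × ℝ × ℝ

/-- The contribution ratio `r_{i,j}(q)`. -/
def ratio (S : Setup n) (i j : Fin n) (q : ℝ) : ℝ :=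
  if S.theta i < S.theta j then (S.theta j - q) / (S.theta j - S.theta i) else 1

/-- The contribution of the tuple `x = (i', j', q, p)` to event `i`:
`r_{i,j'}(q)` if `i' = i`, and `1 - r_{i',i}(q)` if `j' = i ≠ i'`. -/
def contrib (S : Setup n) (x : BiTuple n) (i : Fin n) : ℝ :=
  (if x.1 = i then ratio S x.1 x.2.1 x.2.2.1 else 0) +
    (if x.2.1 = i ∧ x.1 ≠ i then 1 - ratio S x.1 x.2.1 x.2.2.1 else 0)

/-- A bi-event post-processing plan. -/
def IsBiPlan (S : Setup n) (χ : BiTuple n →₀ ℝ) : Prop :=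
  (∀ x, 0 ≤ χ x) ∧
    ∀ x ∈ χ.support, x.1 ≤ x.2.1 ∧ x.2.2.1 ∈ Set.Icc (0 : ℝ) 1 ∧
      x.2.2.2 ∈ Set.Icc (0 : ℝ) 1 ∧ S.theta x.1 ≤ x.2.2.1 ∧ x.2.2.1 ≤ S.theta x.2.1

/-- Feasibility of a bi-event post-processing plan for `ℓ_t` ECE budget `ε`. -/
def FeasibleBiPlan (S : Setup n) (t ε : ℝ) (χ : BiTuple n →₀ ℝ) : Prop :=
  IsBiPlan S χ ∧
    (∑ x ∈ χ.support, χ x * |x.2.2.1 - x.2.2.2| ^ t) ≤ ε ^ t ∧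
    ∀ i, (∑ x ∈ χ.support, χ x * contrib S x i) = S.lam i

/-- The value `f_i(p)` of the predictor generated by a bi-event post-processing plan. -/
def genValBi (S : Setup n) (χ : BiTuple n →₀ ℝ) (i : Fin n) (p : ℝ) : ℝ :=
  1 / S.lam i * ∑ x ∈ χ.support.filter fun x => x.2.2.2 = p, χ x * contrib S x i

/-- The objective of LP-TwoStep+: `∑ χ_{i,j}(q,p) U_{i,j}(q,p)`. -/
def biObj (S : Setup n) (U : Fin n → ℝ → ℝ) (χ : BiTuple n →₀ ℝ) : ℝ :=
  ∑ x ∈ χ.support, χ x * (ratio S x.1 x.2.1 x.2.2.1 * U x.1 x.2.2.2 +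
    (1 - ratio S x.1 x.2.1 x.2.2.1) * U x.2.1 x.2.2.2)

/-- The optimal value of LP-TwoStep+. -/
def OPTBi (S : Setup n) (U : Fin n → ℝ → ℝ) (t ε : ℝ) : ℝ :=
  sSup {v | ∃ χ : BiTuple n →₀ ℝ, FeasibleBiPlan S t ε χ ∧ v = biObj S U χ}

/-- `U` is piecewise constant with all its discontinuity points in `Z`. -/
def PiecewiseConstWrt (Z : Finset ℝ) (U : ℝ → ℝ) : Prop :=
  ∀ x ∈ Set.Icc (0 : ℝ) 1, ∀ y ∈ Set.Icc (0 : ℝ) 1,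
    (∀ z ∈ Z, z ∉ Set.uIcc x y) → U x = U y

/-- The bound `S = ⌈2 ln(1/δ) / ln(1+δ)⌉` of the second discretization layer. -/
def Sbound (δ : ℝ) : ℕ := ⌈2 * Real.log (1 / δ) / Real.log (1 + δ)⌉₊

/-- The instance-dependent two-layer discretized set `S_δ`. -/
def gridSet (S : Setup n) (Z : Finset ℝ) (ε t δ : ℝ) : Set ℝ :=
  ({x : ℝ | ∃ k : ℕ, x = (k : ℝ) * δ} ∪ {(1 : ℝ)} ∪ Set.range S.theta ∪ (↑Z : Set ℝ) ∪
      {x : ℝ | ∃ z ∈ (↑Z : Set ℝ) ∪ Set.range S.theta, ∃ s : ℕ, s ≤ Sbound δ ∧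
        (x = z + (ε ^ t * δ * (1 + δ) ^ s) ^ (1 / t) ∨
          x = z - (ε ^ t * δ * (1 + δ) ^ s) ^ (1 / t))}) ∩
    Set.Icc (0 : ℝ) 1

/-- Feasibility for the discretized program LP-DiscTwoStep+. -/
def DiscFeasibleBiPlan (S : Setup n) (Z : Finset ℝ) (t ε δ : ℝ) (χ : BiTuple n →₀ ℝ) : Prop :=
  FeasibleBiPlan S t ε χ ∧
    ∀ x ∈ χ.support, x.2.2.1 ∈ gridSet S Z ε t δ ∧ x.2.2.2 ∈ gridSet S Z ε t δ

/-- The optimal value of LP-DiscTwoStep+. -/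
def OPTBiDisc (S : Setup n) (U : Fin n → ℝ → ℝ) (Z : Finset ℝ) (t ε δ : ℝ) : ℝ :=
  sSup {v | ∃ χ : BiTuple n →₀ ℝ, DiscFeasibleBiPlan S Z t ε δ χ ∧ v = biObj S U χ}

/-- A Bayesian persuasion instance with signal-dependent bias: states `θ_i` with
prior `λ`, actions `A`, sender utility `u a i = u(a, θ_i) ≥ 0`, and receiver utility
determined by `v1 a = v(a,1)` and `v0 a = v(a,0)`. -/
structure PSetup (n : ℕ) (A : Type*) : Type _ where
  lam : Fin n → ℝ
  theta : Fin n → ℝ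
  u : A → Fin n → ℝ
  v1 : A → ℝ
  v0 : A → ℝ
  lam_pos : ∀ i, 0 < lam i
  lam_sum : ∑ i, lam i = 1
  theta_mem : ∀ i, theta i ∈ Set.Icc (0 : ℝ) 1
  u_nonneg : ∀ a i, 0 ≤ u a i

variable {A σT : Type*}

/-- The receiver's utility from action `a` at belief mean `x`. -/
def rcvU (P : PSetup n A) (a : A) (x : ℝ) : ℝ := x * P.v1 a + (1 - x) * P.v0 a

/-- The total probability `m(σ)` of a signal `σ`. -/
def mass [Fintype σT] (P : PSetup n A) (π : Fin n → σT → ℝ) (σ : σT) : ℝ :=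
  ∑ i, P.lam i * π i σ

/-- The biased posterior mean `p(σ)` of the receiver upon signal `σ`. -/
def belief [Fintype σT] (P : PSetup n A) (π : Fin n → σT → ℝ) (b : σT → ℝ) (σ : σT) : ℝ :=
  (b σ + ∑ i, P.lam i * π i σ * P.theta i) / mass P π σ

/-- Validity of a sender strategy `(π, b)`. -/
def ValidStrategy [Fintype σT] (P : PSetup n A) (π : Fin n → σT → ℝ) (b : σT → ℝ) : Prop :=
  (∀ i σ, 0 ≤ π i σ) ∧ (∀ i, ∑ σ, π i σ = 1) ∧
    ∀ σ, 0 < mass P π σ → belief P π b σ ∈ Set.Icc (0 : ℝ) 1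

/-- `astar` is a receiver best-response selection for the strategy `(π, b)`. -/
def BestResponse [Fintype σT] (P : PSetup n A) (π : Fin n → σT → ℝ) (b : σT → ℝ)
    (astar : σT → A) : Prop :=
  ∀ σ, 0 < mass P π σ → ∀ a, rcvU P a (belief P π b σ) ≤ rcvU P (astar σ) (belief P π b σ)

/-- The bounded-rationality constraint on the total bias. -/
def BRconstraint [Fintype σT] (P : PSetup n A) (t ε : ℝ) (π : Fin n → σT → ℝ)
    (b : σT → ℝ) : Prop :=
  (∑ σ, mass P π σ * |b σ / mass P π σ| ^ t) ^ (1 / t) ≤ ε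

/-- The sender's expected payoff from strategy `π` with receiver selection `astar`. -/
def senderPayoff [Fintype σT] (P : PSetup n A) (π : Fin n → σT → ℝ) (astar : σT → A) : ℝ :=
  ∑ i, P.lam i * ∑ σ, π i σ * P.u (astar σ) i

/-- Feasibility for the action-recommendation program P-ActRec. -/
def PActRecFeasible [Fintype A] (P : PSetup n A) (t ε : ℝ)
    (π : Fin n → A → ℝ) (b : A → ℝ) : Prop :=
  (∀ i a, 0 ≤ π i a) ∧ (∀ i, ∑ a, π i a = 1) ∧
  (∀ a, mass P π a = 0 → b a = 0) ∧
  (∑ a, mass P π a * |b a / mass P π a| ^ t) ≤ ε ^ t ∧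
  (∀ a, 0 ≤ b a + ∑ i, P.lam i * π i a * P.theta i) ∧
  (∀ a, b a + ∑ i, P.lam i * π i a * P.theta i ≤ mass P π a) ∧
  ∀ a a' : A,
    (b a + ∑ i, P.lam i * π i a * P.theta i) * P.v1 a' +
        (mass P π a - (b a + ∑ i, P.lam i * π i a * P.theta i)) * P.v0 a' ≤
      (b a + ∑ i, P.lam i * π i a * P.theta i) * P.v1 a +
        (mass P π a - (b a + ∑ i, P.lam i * π i a * P.theta i)) * P.v0 a

/-- The sender-side marginal probability of recommendation `a` (calibration model). -/
def pmass [Fintype A] (S : Setup n) (π : Fin n → A → ℝ) (a : A) : ℝ := ∑ i, S.lam i * π i a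

/-- The biased posterior mean associated with recommendation `a` (calibration model). -/
def pbelief [Fintype A] (S : Setup n) (π : Fin n → A → ℝ) (b : A → ℝ) (a : A) : ℝ :=
  (b a + ∑ i, S.lam i * π i a * S.theta i) / pmass S π a

/-!
Pairing every prediction `p` of a calibrated predictor with its true expected outcome `κ(p)` gives
a plan whose cost is the calibration error and whose `q`-marginal, being made of conditional means
of `θ`, is below the prior in the convex order by Jensen's inequality.

Conversely, a mean-preserving contraction of the prior is below it in the convex order, because on
a finite set every convex function is an affine function plus a nonnegative combination of hinges
`(s - x)⁺`, whose expectations are the integrated CDFs. By a finite form of Strassen's theorem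
(Hahn–Banach separation) it is therefore the marginal of a perfectly calibrated predictor. Drawing
`p` from the plan given that predictor's report `q` yields true expected outcomes that are averages
of the `q`s, so Jensen's inequality for `|· - p| ^ t` bounds the calibration error by the cost.
-/

open Finsupp (linearCombination linearCombination_apply linearCombination_single mapDomain)

section FiniteWeights

variable {α β R : Type*}

lemma linearCombination_congr {M : Type*} [Semiring R] [AddCommMonoid M] [Module R M]
    {μ : α →₀ R} {h k : α → M} (hhk : ∀ a ∈ μ.support, h a = k a) :
    linearCombination R h μ = linearCombination R k μ :=
  sum_congr rfl fun a ha => by simp only [hhk a ha]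

lemma linearCombination_mono [Semiring R] [PartialOrder R] [IsOrderedRing R] {μ : α →₀ R}
    (hμ : 0 ≤ μ) {h k : α → R} (hhk : ∀ a ∈ μ.support, h a ≤ k a) :
    linearCombination R h μ ≤ linearCombination R k μ :=
  sum_le_sum fun a ha => mul_le_mul_of_nonneg_left (hhk a ha) (hμ a)

lemma linearCombination_one_eq_sum [Semiring R] (μ : α →₀ R) :
    linearCombination R (fun _ => (1 : R)) μ = ∑ a ∈ μ.support, μ a := by
  simp [linearCombination_apply, Finsupp.sum]

lemma support_smul_subset [Semiring R] (h : α → R) (μ : α →₀ R) :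
    (h • μ).support ⊆ μ.support := by
  intro a ha
  rw [Finsupp.mem_support_iff] at ha ⊢
  exact right_ne_zero_of_mul ha

lemma linearCombination_one_smul [CommSemiring R] (h : α → R) (μ : α →₀ R) :
    linearCombination R (fun _ => (1 : R)) (h • μ) = linearCombination R h μ := by
  rw [linearCombination_apply,
    Finsupp.sum_of_support_subset _ (support_smul_subset h μ) _ (by simp)]
  exact sum_congr rfl fun a _ => by simp [mul_comm]

lemma mapDomain_apply_eq_sum_filter [AddCommMonoid R] [DecidableEq β] (F : α → β) (μ : α →₀ R)
    (b : β) : mapDomain F μ b = ∑ a ∈ μ.support with F a = b, μ a := by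
  simp [mapDomain, Finsupp.sum, Finsupp.single_apply, sum_filter]

lemma mapDomain_smul_apply_eq_sum_filter [Semiring R] [DecidableEq β] (F : α → β) (h : α → R)
    (μ : α →₀ R) (b : β) :
    mapDomain F (h • μ) b = ∑ a ∈ μ.support with F a = b, h a * μ a := by
  rw [mapDomain_apply_eq_sum_filter]
  refine sum_subset (filter_subset_filter _ (support_smul_subset h μ)) fun a ha hna => ?_
  by_contra hne
  exact hna (mem_filter.2 ⟨Finsupp.mem_support_iff.2 hne, (mem_filter.1 ha).2⟩)

lemma IsDist.linearCombination_one {μ : ℝ →₀ ℝ} (hμ : IsDist μ) :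
    linearCombination ℝ (fun _ => (1 : ℝ)) μ = 1 := by
  rw [linearCombination_one_eq_sum, hμ.2.2]

lemma isDist_mapDomain {μ : α →₀ ℝ} (hμ : 0 ≤ μ) {F : α → ℝ}
    (hF : ∀ a ∈ μ.support, F a ∈ Set.Icc (0 : ℝ) 1)
    (hmass : linearCombination ℝ (fun _ => (1 : ℝ)) μ = 1) : IsDist (mapDomain F μ) := by
  classical
  refine ⟨Finsupp.mapDomain_nonneg hμ, fun p hp => ?_, ?_⟩
  · obtain ⟨a, ha, rfl⟩ := mem_image.1 (Finsupp.mapDomain_support hp)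
    exact hF a ha
  · rw [← linearCombination_one_eq_sum, Finsupp.linearCombination_mapDomain]
    exact hmass

end FiniteWeights

section ConvexFunctions

lemma sum_mul_map_le_of_sum_smul_eq {ι E : Type*} [AddCommGroup E] [Module ℝ E] {φ : E → ℝ}
    (hφ : ConvexOn ℝ Set.univ φ) {s : Finset ι} {w : ι → ℝ} (hw : ∀ i ∈ s, 0 ≤ w i)
    {x : ι → E} {z : E} (hz : (∑ i ∈ s, w i) • z = ∑ i ∈ s, w i • x i) :
    (∑ i ∈ s, w i) * φ z ≤ ∑ i ∈ s, w i * φ (x i) := by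
  rcases (sum_nonneg hw).eq_or_lt with hmass | hmass
  · have hw0 : ∀ i ∈ s, w i = 0 := (sum_eq_zero_iff_of_nonneg hw).1 hmass.symm
    rw [← hmass, zero_mul, sum_eq_zero fun i hi => by rw [hw0 i hi, zero_mul]]
  · have hcenter : s.centerMass w x = z := by
      rw [centerMass, ← hz, inv_smul_smul₀ hmass.ne']
    have hjensen := hφ.map_centerMass_le hw hmass fun i _ => Set.mem_univ (x i)
    rw [hcenter, centerMass, smul_eq_mul, ← div_eq_inv_mul, le_div_iff₀' hmass] at hjensen
    simpa only [Function.comp_apply, smul_eq_mul] using hjensen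

lemma linearCombination_mapDomain_le {α β E : Type*} [DecidableEq β] [AddCommGroup E]
    [Module ℝ E] {φ : β → E → ℝ} (hφ : ∀ b, ConvexOn ℝ Set.univ (φ b)) {μ : α →₀ ℝ}
    (hμ : 0 ≤ μ) (F : α → β) {x : α → E} {z : β → E}
    (hz : ∀ b, mapDomain F μ b • z b = ∑ a ∈ μ.support with F a = b, μ a • x a) :
    linearCombination ℝ (fun b => φ b (z b)) (mapDomain F μ)
      ≤ linearCombination ℝ (fun a => φ (F a) (x a)) μ := by
  have hfiber (h : α → ℝ) : linearCombination ℝ h μ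
      = ∑ b ∈ μ.support.image F, ∑ a ∈ μ.support with F a = b, μ a * h a :=
    (sum_fiberwise_of_maps_to (fun a => mem_image_of_mem F) _).symm
  rw [Finsupp.linearCombination_mapDomain, hfiber, hfiber]
  refine sum_le_sum fun b _ => ?_
  calc ∑ a ∈ μ.support with F a = b, μ a * φ (F a) (z (F a))
      = (∑ a ∈ μ.support with F a = b, μ a) * φ b (z b) := by
        rw [sum_mul]
        exact sum_congr rfl fun a ha => by rw [(mem_filter.1 ha).2]
    _ ≤ ∑ a ∈ μ.support with F a = b, μ a * φ b (x a) :=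
        sum_mul_map_le_of_sum_smul_eq (hφ b) (fun a _ => hμ a)
          (by rw [← mapDomain_apply_eq_sum_filter, hz])
    _ = ∑ a ∈ μ.support with F a = b, μ a * φ (F a) (x a) :=
        sum_congr rfl fun a ha => by rw [(mem_filter.1 ha).2]

lemma convexOn_abs_sub_rpow {t : ℝ} (ht : 1 ≤ t) (p : ℝ) :
    ConvexOn ℝ Set.univ fun x : ℝ => |x - p| ^ t := by
  have habs : ConvexOn ℝ Set.univ fun x : ℝ => |x - p| := convexOn_univ_dist p
  refine ⟨convex_univ, fun x _ y _ a b ha hb hab => ?_⟩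
  calc |a • x + b • y - p| ^ t
      ≤ (a • |x - p| + b • |y - p|) ^ t :=
        Real.rpow_le_rpow (abs_nonneg _) (habs.2 trivial trivial ha hb hab) (by linarith)
    _ ≤ a • |x - p| ^ t + b • |y - p| ^ t :=
        (convexOn_rpow ht).2 (Set.mem_Ici.2 (abs_nonneg _)) (Set.mem_Ici.2 (abs_nonneg _)) ha hb hab

lemma convexOn_posPart_sub (s : ℝ) : ConvexOn ℝ Set.univ fun x : ℝ => (s - x)⁺ :=
  ((convexOn_const s convex_univ).sub (concaveOn_id convex_univ)).sup (convexOn_const 0 convex_univ)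

lemma convexOn_finset_sup' {E κ : Type*} [AddCommGroup E] [Module ℝ E] {s : Finset κ}
    (hs : s.Nonempty) {φ : κ → E → ℝ} (hφ : ∀ j ∈ s, ConvexOn ℝ Set.univ (φ j)) :
    ConvexOn ℝ Set.univ (s.sup' hs φ) :=
  sup'_induction hs φ (fun _ h _ h' => h.sup h') hφ

lemma mul_map_le_mul_map_add_mul_map {φ : ℝ → ℝ} (hφ : ConvexOn ℝ Set.univ φ) {x m z : ℝ}
    (hxm : x ≤ m) (hmz : m < z) : (z - x) * φ m ≤ (z - m) * φ x + (m - x) * φ z := by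
  rcases hxm.eq_or_lt with rfl | hxm
  · simp
  · exact hφ.secant_mono_aux1 trivial trivial hxm hmz

end ConvexFunctions

section Polylines

/-- The piecewise linear function `a + b x + ∑ s, c s (s - x)⁺`, written with one hinge at each
knot `s`; it is convex as soon as `0 ≤ c`. -/
def polyline (a b : ℝ) (c : ℝ →₀ ℝ) (x : ℝ) : ℝ :=
  a + b * x + linearCombination ℝ (fun s => (s - x)⁺) c

variable {φ : ℝ → ℝ} {a b : ℝ} {c : ℝ →₀ ℝ}

lemma polyline_add_single (a b : ℝ) (c : ℝ →₀ ℝ) (z d x : ℝ) :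
    polyline a b (c + Finsupp.single z d) x = polyline a b c x + d * (z - x)⁺ := by
  simp only [polyline, map_add, linearCombination_single, smul_eq_mul, add_assoc]

lemma polyline_eq_of_le_support {x : ℝ} (hx : ∀ s ∈ c.support, x ≤ s) :
    polyline a b c x
      = a + linearCombination ℝ id c + (b - linearCombination ℝ (fun _ => (1 : ℝ)) c) * x := by
  have hhinge : linearCombination ℝ (fun s => (s - x)⁺) c
      = linearCombination ℝ id c - linearCombination ℝ (fun _ => (1 : ℝ)) c * x := by
    simp only [linearCombination_apply, Finsupp.sum, sum_mul, ← sum_sub_distrib, smul_eq_mul]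
    refine sum_congr rfl fun s hs => ?_
    rw [posPart_eq_self.2 (sub_nonneg.2 (hx s hs)), id, mul_one, mul_sub]
  rw [polyline, hhinge]
  ring

lemma exists_polyline_add_single_minorant (hφ : ConvexOn ℝ Set.univ φ) {m z : ℝ} (hmz : m < z)
    (hc : ∀ s ∈ c.support, z ≤ s) (hz : polyline a b c z = φ z) (hm : polyline a b c m ≤ φ m) :
    ∃ d, 0 ≤ d ∧ polyline a b (c + Finsupp.single z d) m = φ m ∧
      ∀ x ≤ m, polyline a b (c + Finsupp.single z d) x ≤ φ x := by
  have hzm : 0 < z - m := sub_pos.2 hmz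
  set d := (φ m - polyline a b c m) / (z - m)
  have hdm : d * (z - m) = φ m - polyline a b c m := div_mul_cancel₀ _ hzm.ne'
  have hleft {x : ℝ} (hx : x ≤ z) :
      polyline a b (c + Finsupp.single z d) x = polyline a b c x + d * (z - x) := by
    rw [polyline_add_single, posPart_eq_self.2 (sub_nonneg.2 hx)]
  refine ⟨d, div_nonneg (sub_nonneg.2 hm) hzm.le, by rw [hleft hmz.le, hdm]; ring,
    fun x hx => le_of_mul_le_mul_left ?_ hzm⟩
  have haffine : (z - m) * polyline a b c x
      = (z - x) * polyline a b c m - (m - x) * polyline a b c z := by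
    rw [polyline_eq_of_le_support hc, polyline_eq_of_le_support fun s hs => hmz.le.trans (hc s hs),
      polyline_eq_of_le_support fun s hs => (hx.trans hmz.le).trans (hc s hs)]
    ring
  calc (z - m) * polyline a b (c + Finsupp.single z d) x
      = (z - x) * φ m - (m - x) * φ z := by
        rw [hleft (hx.trans hmz.le)]
        linear_combination haffine + (z - x) * hdm - (m - x) * hz
    _ ≤ (z - m) * φ x := sub_le_iff_le_add.2 (mul_map_le_mul_map_add_mul_map hφ hx hmz)

lemma exists_affine_minorant_left (hφ : ConvexOn ℝ Set.univ φ) (m : ℝ) :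
    ∃ a b, polyline a b 0 m = φ m ∧ ∀ x ≤ m, polyline a b 0 x ≤ φ x := by
  refine ⟨φ m - (φ (m + 1) - φ m) * m, φ (m + 1) - φ m, by simp [polyline], fun x hx => ?_⟩
  have hsecant := mul_map_le_mul_map_add_mul_map hφ hx (lt_add_one m)
  simp only [polyline, map_zero]
  linarith

/- Knots are added from right to left; at each stage the polyline extends linearly to the left,
where it stays below `φ`, so the slope increment at the next knot is nonnegative. -/
lemma exists_polyline_eqOn (hφ : ConvexOn ℝ Set.univ φ) {X : Finset ℝ} (hX : X.Nonempty) :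
    ∃ a b c, 0 ≤ c ∧ c.support ⊆ X ∧ (∀ x ∈ X, polyline a b c x = φ x) ∧
      ∀ x, (∀ y ∈ X, x ≤ y) → polyline a b c x ≤ φ x := by
  induction X using Finset.induction_on_min with
  | empty => exact absurd hX Finset.not_nonempty_empty
  | insert m X hm ih =>
    simp only [mem_insert, forall_eq_or_imp]
    rcases X.eq_empty_or_nonempty with rfl | hX
    · obtain ⟨a, b, hab, hle⟩ := exists_affine_minorant_left hφ m
      exact ⟨a, b, 0, le_rfl, by simp, ⟨hab, by simp⟩, fun x hx => hle x hx.1⟩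
    · obtain ⟨a, b, c, hc, hcX, heq, hle⟩ := ih hX
      have hzX := X.min'_mem hX
      have hz : ∀ y ∈ X, X.min' hX ≤ y := fun y hy => X.min'_le y hy
      obtain ⟨d, hd, hdm, hdle⟩ := exists_polyline_add_single_minorant hφ (hm _ hzX)
        (fun s hs => hz s (hcX hs)) (heq _ hzX) (hle m fun y hy => (hm y hy).le)
      refine ⟨a, b, c + Finsupp.single (X.min' hX) d,
        add_nonneg hc (Finsupp.single_nonneg.2 hd), ?_, ⟨hdm, fun x hx => ?_⟩,
        fun x hx => hdle x hx.1⟩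
      · refine (Finsupp.support_add.trans (union_subset hcX ?_)).trans (subset_insert m X)
        exact Finsupp.support_single_subset.trans (singleton_subset_iff.2 hzX)
      · rw [polyline_add_single, posPart_eq_zero.2 (sub_nonpos.2 (hz x hx)), mul_zero, add_zero,
          heq x hx]

end Polylines

section ConvexOrder

variable {μ ν : ℝ →₀ ℝ}

lemma linearCombination_polyline (a b : ℝ) (c μ : ℝ →₀ ℝ) :
    linearCombination ℝ (polyline a b c) μ
      = a * linearCombination ℝ (fun _ => (1 : ℝ)) μ + b * linearCombination ℝ id μ
        + linearCombination ℝ (fun s => linearCombination ℝ (fun x => (s - x)⁺) μ) c := by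
  simp only [linearCombination_apply, Finsupp.sum, polyline, smul_eq_mul, mul_add, mul_sum,
    sum_add_distrib, id]
  rw [sum_comm (s := μ.support)]
  simp only [mul_left_comm, mul_one, mul_comm a]

lemma linearCombination_posPart_sub {s : ℝ} (hμ : ∀ x ∈ μ.support, x ≤ s) :
    linearCombination ℝ (fun x => (s - x)⁺) μ
      = s * linearCombination ℝ (fun _ => (1 : ℝ)) μ - linearCombination ℝ id μ := by
  simp only [linearCombination_apply, Finsupp.sum, mul_sum, ← sum_sub_distrib, smul_eq_mul, id]
  refine sum_congr rfl fun x hx => ?_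
  rw [posPart_eq_self.2 (sub_nonneg.2 (hμ x hx))]
  ring

lemma linearCombination_convex_le_of_potential_le {X : Finset ℝ} (hμX : μ.support ⊆ X)
    (hνX : ν.support ⊆ X)
    (hmass : linearCombination ℝ (fun _ => (1 : ℝ)) μ = linearCombination ℝ (fun _ => (1 : ℝ)) ν)
    (hmean : linearCombination ℝ id μ = linearCombination ℝ id ν)
    (hpot : ∀ s ∈ X, linearCombination ℝ (fun x => (s - x)⁺) μ
      ≤ linearCombination ℝ (fun x => (s - x)⁺) ν)
    {φ : ℝ → ℝ} (hφ : ConvexOn ℝ Set.univ φ) :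
    linearCombination ℝ φ μ ≤ linearCombination ℝ φ ν := by
  rcases X.eq_empty_or_nonempty with rfl | hX
  · rw [Finsupp.support_eq_empty.1 (subset_empty.1 hμX),
      Finsupp.support_eq_empty.1 (subset_empty.1 hνX)]
  · obtain ⟨a, b, c, hc, hcX, heq, -⟩ := exists_polyline_eqOn hφ hX
    rw [← linearCombination_congr fun x hx => heq x (hμX hx),
      ← linearCombination_congr fun x hx => heq x (hνX hx),
      linearCombination_polyline, linearCombination_polyline, hmass, hmean]
    gcongr
    exact linearCombination_mono hc fun s hs => hpot s (hcX hs)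

end ConvexOrder

section Prior

lemma integral_ite_le_eq_posPart {a q s : ℝ} (haq : a ≤ q) (has : a ≤ s) :
    ∫ x in a..s, (if q ≤ x then (1 : ℝ) else 0) = (s - q)⁺ := by
  have hstep : (fun x => if q ≤ x then (1 : ℝ) else 0) = (Set.Ici q).indicator 1 := by
    ext x
    simp [Set.indicator_apply]
  have hinter : Set.Icc a s ∩ Set.Ici q = Set.Icc q s := by grind
  rw [hstep, intervalIntegral.integral_of_le has,
    MeasureTheory.setIntegral_congr_set (MeasureTheory.Ioc_ae_eq_Icc (a := a) (b := s)),
    MeasureTheory.setIntegral_indicator measurableSet_Ici, hinter]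
  simp [posPart_def]

lemma monotone_ite_le_one (q : ℝ) : Monotone fun x : ℝ => if q ≤ x then (1 : ℝ) else 0 := by
  intro x y hxy
  grind

lemma cdf_eq_linearCombination (μ : ℝ →₀ ℝ) (x : ℝ) :
    cdf μ x = linearCombination ℝ (fun q => if q ≤ x then (1 : ℝ) else 0) μ := by
  simp [cdf, linearCombination_apply, Finsupp.sum, sum_filter]

lemma integral_cdf_eq_potential {μ : ℝ →₀ ℝ} {a s : ℝ} (hμ : ∀ q ∈ μ.support, a ≤ q)
    (has : a ≤ s) :
    ∫ x in a..s, cdf μ x = linearCombination ℝ (fun q => (s - q)⁺) μ := by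
  simp only [cdf_eq_linearCombination, linearCombination_apply, Finsupp.sum, smul_eq_mul]
  rw [intervalIntegral.integral_finsetSum fun q _ =>
    (monotone_ite_le_one q).intervalIntegrable.const_mul (μ q)]
  refine sum_congr rfl fun q hq => ?_
  rw [intervalIntegral.integral_const_mul, integral_ite_le_eq_posPart (hμ q hq) has]

/-- The distribution of the expected outcome, with mass `λ_i` at `θ_i`. -/
def priorDist (S : Setup n) : ℝ →₀ ℝ := ∑ i, Finsupp.single (S.theta i) (S.lam i)

variable (S : Setup n)

lemma linearCombination_priorDist {E : Type*} [AddCommGroup E] [Module ℝ E] (φ : ℝ → E) :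
    linearCombination ℝ φ (priorDist S) = ∑ i, S.lam i • φ (S.theta i) := by
  simp only [priorDist, map_sum, linearCombination_single]

lemma priorCdf_eq_cdf_priorDist : priorCdf S = cdf (priorDist S) := by
  ext x
  rw [cdf_eq_linearCombination, linearCombination_priorDist]
  simp [priorCdf, sum_filter]

lemma linearCombination_priorDist_one :
    linearCombination ℝ (fun _ => (1 : ℝ)) (priorDist S) = 1 := by
  simp [linearCombination_priorDist, S.lam_sum]

lemma mem_Icc_of_mem_support_priorDist {x : ℝ} (hx : x ∈ (priorDist S).support) :
    x ∈ Set.Icc (0 : ℝ) 1 := by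
  obtain ⟨i, -, hi⟩ := mem_biUnion.1 (Finsupp.support_finsetSum hx)
  rw [mem_singleton.1 (Finsupp.support_single_subset hi)]
  exact S.theta_mem i

lemma mpcPrior_iff_potential {μ : ℝ →₀ ℝ} (hμ : IsDist μ) :
    MPCprior S μ ↔
      (∀ s ∈ Set.Icc (0 : ℝ) 1, linearCombination ℝ (fun x => (s - x)⁺) μ
        ≤ linearCombination ℝ (fun x => (s - x)⁺) (priorDist S)) ∧
      linearCombination ℝ id μ = linearCombination ℝ id (priorDist S) := by
  have hmean : linearCombination ℝ (fun x => (1 - x)⁺) μ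
      = linearCombination ℝ (fun x => (1 - x)⁺) (priorDist S)
      ↔ linearCombination ℝ id μ = linearCombination ℝ id (priorDist S) := by
    rw [linearCombination_posPart_sub fun x hx => (hμ.2.1 x hx).2,
      linearCombination_posPart_sub fun x hx => (mem_Icc_of_mem_support_priorDist S hx).2,
      hμ.linearCombination_one, linearCombination_priorDist_one, sub_right_inj]
  have hpotμ {s : ℝ} (hs : 0 ≤ s) := integral_cdf_eq_potential (fun q hq => (hμ.2.1 q hq).1) hs
  have hpotS {s : ℝ} (hs : 0 ≤ s) := integral_cdf_eq_potential
    (fun q hq => (mem_Icc_of_mem_support_priorDist S hq).1) hs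
  rw [MPCprior, priorCdf_eq_cdf_priorDist, hpotμ zero_le_one, hpotS zero_le_one, hmean]
  refine and_congr_left fun _ => forall₂_congr fun s hs => ?_
  rw [hpotμ hs.1, hpotS hs.1]

lemma mpcPrior_iff_forall_convexOn {μ : ℝ →₀ ℝ} (hμ : IsDist μ) :
    MPCprior S μ ↔ ∀ φ : ℝ → ℝ, ConvexOn ℝ Set.univ φ →
      linearCombination ℝ φ μ ≤ ∑ i, S.lam i * φ (S.theta i) := by
  simp only [mpcPrior_iff_potential S hμ, ← smul_eq_mul, ← linearCombination_priorDist]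
  refine ⟨fun ⟨hpot, hmean⟩ φ hφ => ?_,
    fun h => ⟨fun s _ => h _ (convexOn_posPart_sub s),
      le_antisymm (h _ (convexOn_id convex_univ)) ?_⟩⟩
  · refine linearCombination_convex_le_of_potential_le subset_union_left subset_union_right
      (hμ.linearCombination_one.trans (linearCombination_priorDist_one S).symm) hmean
      (fun s hs => hpot s ?_) hφ
    rcases mem_union.1 hs with hs | hs
    exacts [hμ.2.1 s hs, mem_Icc_of_mem_support_priorDist S hs]
  · have hneg : ∀ ν, linearCombination ℝ (fun x : ℝ => -x) ν = -linearCombination ℝ id ν := by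
      simp [linearCombination_apply, Finsupp.sum]
    have := h (fun x => -x) (concaveOn_id convex_univ).neg
    rwa [hneg, hneg, neg_le_neg_iff] at this

end Prior

section Strassen

variable {ι κ V E : Type*} [Fintype ι] [Fintype κ]

/-- The map sending a weight matrix `π` to the vectors `∑ i, π i j • X i` that arise when a share
`π i j` of each `X i` is allotted to `j`. -/
def allocation [AddCommGroup V] [Module ℝ V] (X : ι → V) : (ι → κ → ℝ) →ₗ[ℝ] κ → V where
  toFun π j := ∑ i, π i j • X i
  map_add' π ρ := by ext j; simp only [Pi.add_apply, add_smul, sum_add_distrib]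
  map_smul' r π := by
    ext j
    simp only [Pi.smul_apply, smul_eq_mul, mul_smul, smul_sum, RingHom.id_apply]

variable [Nonempty κ] [AddCommGroup V] [Module ℝ V] [TopologicalSpace V]
  [AddCommGroup E] [Module ℝ E] [TopologicalSpace E]

lemma exists_stdSimplex_sum_allocation_eq_sum_sup' (X : ι → V) (ℓ : κ → V →L[ℝ] ℝ) :
    ∃ π ∈ Set.univ.pi fun _ : ι => stdSimplex ℝ κ,
      ∑ j, ℓ j (allocation X π j) = ∑ i, univ.sup' univ_nonempty fun j => ℓ j (X i) := by
  classical
  choose best hbest using fun i =>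
    exists_mem_eq_sup' (univ_nonempty (α := κ)) fun j => ℓ j (X i)
  refine ⟨fun i => Pi.single (best i) 1, fun i _ => single_mem_stdSimplex ℝ (best i), ?_⟩
  simp only [allocation, LinearMap.coe_mk, AddHom.coe_mk, map_sum, map_smul, (hbest _).2]
  rw [sum_comm]
  simp [Pi.single_apply]

lemma exists_stdSimplex_allocation_eq [IsTopologicalAddGroup V] [ContinuousSMul ℝ V]
    [LocallyConvexSpace ℝ V] [T2Space V] {X : ι → V} {Z : κ → V}
    (hdual : ∀ ℓ : κ → V →L[ℝ] ℝ,
      ∑ j, ℓ j (Z j) ≤ ∑ i, univ.sup' univ_nonempty fun j => ℓ j (X i)) :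
    ∃ π ∈ Set.univ.pi fun _ : ι => stdSimplex ℝ κ, allocation X π = Z := by
  classical
  by_contra hZ
  have hcont : Continuous (allocation X : (ι → κ → ℝ) →ₗ[ℝ] κ → V) :=
    continuous_pi fun j => by simp only [allocation, LinearMap.coe_mk, AddHom.coe_mk]; fun_prop
  have hclosed : IsClosed (allocation X '' Set.univ.pi fun _ => stdSimplex ℝ κ) :=
    ((isCompact_univ_pi fun _ => isCompact_stdSimplex ℝ κ).image hcont).isClosed
  obtain ⟨L, u, hLu, huZ⟩ := geometric_hahn_banach_closed_point
    ((convex_pi fun _ _ => convex_stdSimplex ℝ κ).linear_image (allocation X)) hclosed hZ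
  let ℓ : κ → V →L[ℝ] ℝ := fun j => L.comp (ContinuousLinearMap.single ℝ (fun _ => V) j)
  have hL (w : κ → V) : L w = ∑ j, ℓ j (w j) := by
    conv_lhs => rw [← univ_sum_single w, map_sum]
    rfl
  obtain ⟨π, hπ, hπmax⟩ := exists_stdSimplex_sum_allocation_eq_sum_sup' X ℓ
  refine lt_irrefl (L Z) ?_
  calc L Z ≤ L (allocation X π) := by rw [hL, hL, hπmax]; exact hdual ℓ
    _ < u := hLu _ ⟨π, hπ, rfl⟩
    _ < L Z := huZ

/- The homogenisation `x ↦ (1, x)` turns the mass and barycentre conditions into a single linear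
one, and the dual certificates into maxima of affine functions. -/
lemma exists_stdSimplex_of_forall_convexOn [IsTopologicalAddGroup E] [ContinuousSMul ℝ E]
    [LocallyConvexSpace ℝ E] [T2Space E] {a : ι → ℝ} (ha : ∀ i, 0 ≤ a i) {b : κ → ℝ}
    (hb : ∀ j, 0 ≤ b j) {x : ι → E} {y : κ → E}
    (horder : ∀ φ : E → ℝ, ConvexOn ℝ Set.univ φ → ∑ j, b j * φ (y j) ≤ ∑ i, a i * φ (x i)) :
    ∃ π : ι → κ → ℝ, (∀ i, π i ∈ stdSimplex ℝ κ) ∧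
      ∀ j, ∑ i, a i * π i j = b j ∧ ∑ i, (a i * π i j) • x i = b j • y j := by
  have hdual (ℓ : κ → ℝ × E →L[ℝ] ℝ) : ∑ j, ℓ j (b j • (1, y j))
      ≤ ∑ i, univ.sup' univ_nonempty fun j => ℓ j (a i • (1, x i)) := by
    let φ : E → ℝ := univ.sup' univ_nonempty fun j e => ℓ j (1, e)
    have hφ : ConvexOn ℝ Set.univ φ := convexOn_finset_sup' _ fun j _ =>
      ((ℓ j).toLinearMap.convexOn convex_univ).comp_affineMap
        ((AffineMap.const ℝ E (1 : ℝ)).prod (AffineMap.id ℝ E))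
    calc ∑ j, ℓ j (b j • (1, y j)) ≤ ∑ j, b j * φ (y j) := by
          refine sum_le_sum fun j _ => ?_
          rw [map_smul, smul_eq_mul]
          exact mul_le_mul_of_nonneg_left (le_sup' (fun k e => ℓ k (1, e)) (mem_univ j) _) (hb j)
      _ ≤ ∑ i, a i * φ (x i) := horder φ hφ
      _ = ∑ i, univ.sup' univ_nonempty fun j => ℓ j (a i • (1, x i)) := by
          simp only [φ, Finset.sup'_apply, map_smul, smul_eq_mul, mul₀_sup' (ha _)]
  obtain ⟨π, hπ, hsum⟩ := exists_stdSimplex_allocation_eq hdual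
  refine ⟨π, fun i => hπ i trivial, fun j => ?_⟩
  have h := Prod.ext_iff.1 (congrFun hsum j)
  simpa [allocation, Prod.fst_sum, Prod.snd_sum, smul_smul, mul_comm] using h

end Strassen

section Predictors

variable {S : Setup n} {f : Fin n → ℝ →₀ ℝ}

/-- The marginal `f(p) = ∑ i, λ_i f_i(p)` as a finitely supported function. -/
def marginalDist (S : Setup n) (f : Fin n → ℝ →₀ ℝ) : ℝ →₀ ℝ := ∑ i, S.lam i • f i

lemma marginalDist_apply (S : Setup n) (f : Fin n → ℝ →₀ ℝ) (p : ℝ) :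
    marginalDist S f p = marginal S f p := by
  simp [marginalDist, marginal, Finsupp.finsetSum_apply]

lemma linearCombination_marginalDist (S : Setup n) (f : Fin n → ℝ →₀ ℝ) (h : ℝ → ℝ) :
    linearCombination ℝ h (marginalDist S f) = ∑ i, S.lam i * linearCombination ℝ h (f i) := by
  simp only [marginalDist, map_sum, map_smul, smul_eq_mul]

lemma payoffEI_eq_linearCombination (S : Setup n) (f : Fin n → ℝ →₀ ℝ) (U : ℝ → ℝ) :
    payoffEI S U f = linearCombination ℝ U (marginalDist S f) :=
  (linearCombination_marginalDist S f U).symm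

lemma IsPredictor.nonneg (hf : IsPredictor f) (i : Fin n) : 0 ≤ f i := (hf i).1

lemma lam_mul_nonneg (hf : ∀ i, 0 ≤ f i) (i : Fin n) (p : ℝ) : 0 ≤ S.lam i * f i p :=
  mul_nonneg (S.lam_pos i).le (hf i p)

lemma marginal_nonneg (hf : ∀ i, 0 ≤ f i) (p : ℝ) : 0 ≤ marginal S f p :=
  sum_nonneg fun i _ => lam_mul_nonneg hf i p

lemma marginalDist_nonneg (hf : ∀ i, 0 ≤ f i) : 0 ≤ marginalDist S f :=
  sum_nonneg fun i _ => smul_nonneg (S.lam_pos i).le (hf i)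

lemma linearCombination_marginalDist_one (hf : IsPredictor f) :
    linearCombination ℝ (fun _ => (1 : ℝ)) (marginalDist S f) = 1 := by
  simp [linearCombination_marginalDist, (hf _).linearCombination_one, S.lam_sum]

lemma mem_suppF_iff_marginal_ne_zero (hf : ∀ i, 0 ≤ f i) {p : ℝ} :
    p ∈ suppF f ↔ marginal S f p ≠ 0 := by
  rw [marginal, ne_eq, sum_eq_zero_iff_of_nonneg fun i _ => lam_mul_nonneg hf i p]
  simp [suppF, (S.lam_pos _).ne']

lemma support_marginalDist (hf : ∀ i, 0 ≤ f i) : (marginalDist S f).support = suppF f := by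
  ext p
  rw [Finsupp.mem_support_iff, marginalDist_apply, mem_suppF_iff_marginal_ne_zero hf]

lemma linearCombination_marginalDist_eq_sum (hf : ∀ i, 0 ≤ f i) (h : ℝ → ℝ) :
    linearCombination ℝ h (marginalDist S f) = ∑ p ∈ suppF f, marginal S f p * h p := by
  rw [← support_marginalDist (S := S) hf]
  exact sum_congr rfl fun p _ => congrArg (· * h p) (marginalDist_apply S f p)

lemma IsPredictor.sum_suppF (hf : IsPredictor f) (i : Fin n) : ∑ p ∈ suppF f, f i p = 1 := by
  rw [← (hf i).2.2]
  exact (sum_subset (subset_biUnion_of_mem (fun i => (f i).support) (mem_univ i))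
    fun p _ hp => Finsupp.notMem_support_iff.1 hp).symm

lemma marginal_mul_kappa (hf : ∀ i, 0 ≤ f i) (p : ℝ) :
    marginal S f p * kappa S f p = ∑ i, S.lam i * f i p * S.theta i := by
  refine mul_div_cancel_of_imp' fun hp => sum_eq_zero fun i hi => ?_
  rw [marginal, sum_eq_zero_iff_of_nonneg fun i _ => lam_mul_nonneg hf i p] at hp
  rw [hp i hi, zero_mul]

lemma kappa_mem_Icc (hf : ∀ i, 0 ≤ f i) (p : ℝ) : kappa S f p ∈ Set.Icc (0 : ℝ) 1 := by
  refine ⟨div_nonneg (sum_nonneg fun i _ => ?_) (marginal_nonneg hf p),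
    div_le_one_of_le₀ (sum_le_sum fun i _ => ?_) (marginal_nonneg hf p)⟩
  · exact mul_nonneg (lam_mul_nonneg hf i p) (S.theta_mem i).1
  · exact mul_le_of_le_one_right (lam_mul_nonneg hf i p) (S.theta_mem i).2

lemma ece_le_iff (hf : ∀ i, 0 ≤ f i) {t ε : ℝ} (ht : 0 < t) (hε : 0 ≤ ε) :
    ECE S t f ≤ ε ↔
      linearCombination ℝ (fun p => |kappa S f p - p| ^ t) (marginalDist S f) ≤ ε ^ t := by
  have hnonneg : 0 ≤ linearCombination ℝ (fun p => |kappa S f p - p| ^ t) (marginalDist S f) :=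
    sum_nonneg fun p _ => mul_nonneg (marginalDist_nonneg hf p) (by positivity)
  rw [ECE, ← linearCombination_marginalDist_eq_sum hf, one_div,
    Real.rpow_inv_le_iff_of_pos hnonneg hε ht]

lemma linearCombination_comp_kappa_le (hf : IsPredictor f) {φ : ℝ → ℝ}
    (hφ : ConvexOn ℝ Set.univ φ) :
    linearCombination ℝ (φ ∘ kappa S f) (marginalDist S f) ≤ ∑ i, S.lam i * φ (S.theta i) := by
  calc linearCombination ℝ (φ ∘ kappa S f) (marginalDist S f)
      = ∑ p ∈ suppF f, marginal S f p * φ (kappa S f p) :=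
        linearCombination_marginalDist_eq_sum hf.nonneg _
    _ ≤ ∑ p ∈ suppF f, ∑ i, S.lam i * f i p * φ (S.theta i) :=
        sum_le_sum fun p _ => sum_mul_map_le_of_sum_smul_eq hφ
          (fun i _ => lam_mul_nonneg hf.nonneg i p) (marginal_mul_kappa hf.nonneg p)
    _ = ∑ i, S.lam i * φ (S.theta i) * ∑ p ∈ suppF f, f i p := by
        rw [sum_comm]
        simp only [mul_sum, mul_right_comm]
    _ = ∑ i, S.lam i * φ (S.theta i) := by simp only [hf.sum_suppF, mul_one]

end Predictors

section Plans

variable {S : Setup n} {t ε : ℝ} {χ : ℝ × ℝ →₀ ℝ} {g : ℝ →₀ ℝ}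

lemma planMargQ_eq_mapDomain_fst (χ : ℝ × ℝ →₀ ℝ) : planMargQ χ = mapDomain Prod.fst χ := by
  ext q
  rw [planMargQ, mapDomain_apply_eq_sum_filter]

/-- The post-processing plan that pairs each prediction of `f` with its true expected outcome. -/
def calibrationPlan (S : Setup n) (f : Fin n → ℝ →₀ ℝ) : ℝ × ℝ →₀ ℝ :=
  mapDomain (fun p => (kappa S f p, p)) (marginalDist S f)

lemma lpObj_calibrationPlan (S : Setup n) (f : Fin n → ℝ →₀ ℝ) (U : ℝ → ℝ) :
    LPobj U (calibrationPlan S f) = payoffEI S U f := by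
  rw [payoffEI_eq_linearCombination]
  exact Finsupp.linearCombination_mapDomain ℝ (v' := fun x : ℝ × ℝ => U x.2) _ _

lemma lpFeasible_calibrationPlan {f : Fin n → ℝ →₀ ℝ} (hf : IsPredictor f) (ht : 0 < t)
    (hε : 0 ≤ ε) (hece : ECE S t f ≤ ε) :
    LPFeasible S ε t (calibrationPlan S f) (mapDomain (kappa S f) (marginalDist S f)) := by
  have hsupp : ∀ p ∈ (marginalDist S f).support, p ∈ Set.Icc (0 : ℝ) 1 := by
    intro p hp
    rw [support_marginalDist hf.nonneg] at hp
    obtain ⟨i, -, hi⟩ := mem_biUnion.1 hp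
    exact (hf i).2.1 p hi
  have hdist : IsDist (mapDomain (kappa S f) (marginalDist S f)) :=
    isDist_mapDomain (marginalDist_nonneg hf.nonneg) (fun p _ => kappa_mem_Icc hf.nonneg p)
      (linearCombination_marginalDist_one hf)
  refine ⟨Finsupp.mapDomain_nonneg (marginalDist_nonneg hf.nonneg), fun x hx => ?_, ?_,
    fun q => ?_, hdist, (mpcPrior_iff_forall_convexOn S hdist).2 fun φ hφ => ?_⟩
  · obtain ⟨p, hp, rfl⟩ := mem_image.1 (Finsupp.mapDomain_support hx)
    exact ⟨kappa_mem_Icc hf.nonneg p, hsupp p hp⟩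
  · refine (Finsupp.linearCombination_mapDomain ℝ (v' := fun x : ℝ × ℝ => |x.1 - x.2| ^ t)
      _ _).trans_le ?_
    exact (ece_le_iff hf.nonneg ht hε).1 hece
  · rw [planMargQ_eq_mapDomain_fst, calibrationPlan, ← Finsupp.mapDomain_comp]
    rfl
  · rw [Finsupp.linearCombination_mapDomain]
    exact linearCombination_comp_kappa_le hf hφ

lemma exists_perfectlyCalibrated_of_mpcPrior (hg : IsDist g) (hmpc : MPCprior S g) :
    ∃ G : Fin n → ℝ →₀ ℝ, IsPredictor G ∧ PerfectlyCalibrated S G ∧ marginalDist S G = g := by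
  have hne : Nonempty g.support := by
    rw [nonempty_coe_sort]
    exact nonempty_of_sum_ne_zero (hg.2.2.trans_ne one_ne_zero)
  obtain ⟨π, hπ, hsum⟩ := exists_stdSimplex_of_forall_convexOn (fun i => (S.lam_pos i).le)
    (b := fun q : g.support => g q) (fun q => hg.1 q) (x := S.theta) (y := Subtype.val)
    fun φ hφ => by
      rw [sum_coe_sort g.support fun q => g q * φ q]
      exact (mpcPrior_iff_forall_convexOn S hg).1 hmpc φ hφ
  let G : Fin n → ℝ →₀ ℝ := fun i =>
    mapDomain Subtype.val (Finsupp.equivFunOnFinite.symm (π i))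
  have hG (i : Fin n) (q : g.support) : G i q = π i q :=
    Finsupp.mapDomain_apply Subtype.val_injective _ q
  have hG0 (i : Fin n) {q : ℝ} (hq : q ∉ g.support) : G i q = 0 :=
    Finsupp.mapDomain_of_notMem_range _ _ (by simpa using hq)
  have hmarginal (q : ℝ) : marginal S G q = g q := by
    by_cases hq : q ∈ g.support
    · simpa only [marginal, hG _ ⟨q, hq⟩] using (hsum ⟨q, hq⟩).1
    · simp [marginal, hG0 _ hq, Finsupp.notMem_support_iff.1 hq]
  refine ⟨G, fun i => isDist_mapDomain (hπ i).1 (fun q _ => hg.2.1 q q.2) ?_, fun q hq => ?_,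
    Finsupp.ext fun q => by rw [marginalDist_apply, hmarginal]⟩
  · rw [linearCombination_apply, Finsupp.sum_fintype _ _ (by simp)]
    simpa using (hπ i).2
  · obtain ⟨i, -, hi⟩ := mem_biUnion.1 hq
    have hqg : q ∈ g.support := by
      by_contra h
      exact Finsupp.mem_support_iff.1 hi (hG0 i h)
    have hnum : ∑ i, S.lam i * G i q * S.theta i = g q * q := by
      simpa only [hG _ ⟨q, hqg⟩, smul_eq_mul] using (hsum ⟨q, hqg⟩).2
    rw [kappa, hnum, hmarginal, mul_div_cancel_left₀ _ (Finsupp.mem_support_iff.1 hqg)]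

/-- The predictor `f_i(p) = ∑ q, (G_i(q) / G(q)) χ(q, p)` that reports `p` drawn from the plan `χ`
conditionally on the report `q` of `G`; it is `genVal` as a finitely supported function. -/
def generated (S : Setup n) (G : Fin n → ℝ →₀ ℝ) (χ : ℝ × ℝ →₀ ℝ) (i : Fin n) : ℝ →₀ ℝ :=
  mapDomain Prod.snd ((fun x : ℝ × ℝ => G i x.1 / marginal S G x.1) • χ)

lemma sum_mul_generated_apply (S : Setup n) (G : Fin n → ℝ →₀ ℝ) (χ : ℝ × ℝ →₀ ℝ)
    (c : Fin n → ℝ) (p : ℝ) :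
    ∑ i, c i * generated S G χ i p
      = ∑ x ∈ χ.support with x.2 = p, (∑ i, c i * G i x.1) / marginal S G x.1 * χ x := by
  simp only [generated, mapDomain_smul_apply_eq_sum_filter, mul_sum]
  rw [sum_comm]
  simp only [sum_div, sum_mul, mul_div_assoc, mul_assoc]

variable {G : Fin n → ℝ →₀ ℝ}

lemma marginal_ne_zero_of_mem_support (hχ : 0 ≤ χ) (hmarg : mapDomain Prod.fst χ = marginalDist S G)
    {x : ℝ × ℝ} (hx : x ∈ χ.support) : marginal S G x.1 ≠ 0 := by
  rw [← marginalDist_apply, ← hmarg, mapDomain_apply_eq_sum_filter]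
  have hxpos : 0 < χ x := (hχ x).lt_of_ne' (Finsupp.mem_support_iff.1 hx)
  have hxfiber : x ∈ {a ∈ χ.support | a.1 = x.1} := mem_filter.2 ⟨hx, rfl⟩
  exact (sum_pos' (fun y _ => hχ y) ⟨x, hxfiber, hxpos⟩).ne'

lemma marginalDist_generated (hχ : 0 ≤ χ) (hmarg : mapDomain Prod.fst χ = marginalDist S G) :
    marginalDist S (generated S G χ) = mapDomain Prod.snd χ := by
  ext p
  rw [marginalDist_apply, marginal, sum_mul_generated_apply, mapDomain_apply_eq_sum_filter]
  refine sum_congr rfl fun x hx => ?_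
  have hx' : marginal S G x.1 ≠ 0 :=
    marginal_ne_zero_of_mem_support hχ hmarg (mem_filter.1 hx).1
  rw [← marginal, div_self hx', one_mul]

lemma sum_generated_mul_theta (hG : ∀ i, 0 ≤ G i) (hcal : PerfectlyCalibrated S G) (hχ : 0 ≤ χ)
    (hmarg : mapDomain Prod.fst χ = marginalDist S G) (p : ℝ) :
    ∑ i, S.lam i * generated S G χ i p * S.theta i
      = ∑ x ∈ χ.support with x.2 = p, χ x * x.1 := by
  simp only [mul_right_comm _ _ (S.theta _)]
  rw [sum_mul_generated_apply]
  refine sum_congr rfl fun x hx => ?_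
  have hmem : x.1 ∈ suppF G := (mem_suppF_iff_marginal_ne_zero hG).2
    (marginal_ne_zero_of_mem_support hχ hmarg (mem_filter.1 hx).1)
  have hkappa := hcal x.1 hmem
  simp only [kappa, mul_right_comm _ _ (S.theta _)] at hkappa
  rw [hkappa, mul_comm]

lemma isPredictor_generated (hG : IsPredictor G) (hχ : 0 ≤ χ)
    (hχsupp : ∀ x ∈ χ.support, x.2 ∈ Set.Icc (0 : ℝ) 1)
    (hmarg : mapDomain Prod.fst χ = marginalDist S G) : IsPredictor (generated S G χ) := by
  intro i
  refine isDist_mapDomain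
    (fun x => mul_nonneg (div_nonneg (hG.nonneg i _) (marginal_nonneg hG.nonneg _)) (hχ x))
    (fun x hx => hχsupp x (support_smul_subset _ χ hx)) ?_
  calc linearCombination ℝ (fun _ => (1 : ℝ)) ((fun x : ℝ × ℝ => G i x.1 / marginal S G x.1) • χ)
      = linearCombination ℝ (fun q => G i q / marginal S G q) (mapDomain Prod.fst χ) := by
        rw [linearCombination_one_smul, Finsupp.linearCombination_mapDomain]
        rfl
    _ = ∑ q ∈ suppF G, marginal S G q * (G i q / marginal S G q) := by
        rw [hmarg, linearCombination_marginalDist_eq_sum hG.nonneg]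
    _ = ∑ q ∈ suppF G, G i q :=
        sum_congr rfl fun q hq =>
          mul_div_cancel₀ _ ((mem_suppF_iff_marginal_ne_zero hG.nonneg).1 hq)
    _ = 1 := hG.sum_suppF i

lemma ece_generated_le (hG : IsPredictor G) (hcal : PerfectlyCalibrated S G) (hχ : 0 ≤ χ)
    (hχsupp : ∀ x ∈ χ.support, x.2 ∈ Set.Icc (0 : ℝ) 1)
    (hmarg : mapDomain Prod.fst χ = marginalDist S G) (ht : 1 ≤ t) (hε : 0 ≤ ε)
    (hcost : planCost t χ ≤ ε ^ t) : ECE S t (generated S G χ) ≤ ε := by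
  have hf := isPredictor_generated hG hχ hχsupp hmarg
  rw [ece_le_iff hf.nonneg (zero_lt_one.trans_le ht) hε, marginalDist_generated hχ hmarg]
  refine (linearCombination_mapDomain_le (fun p => convexOn_abs_sub_rpow ht p) hχ Prod.snd
    (x := Prod.fst) fun p => ?_).trans hcost
  rw [← marginalDist_generated hχ hmarg, marginalDist_apply, smul_eq_mul,
    marginal_mul_kappa hf.nonneg]
  exact sum_generated_mul_theta hG.nonneg hcal hχ hmarg p

lemma exists_predictor_of_lpFeasible (ht : 1 ≤ t) (hε : 0 ≤ ε) (h : LPFeasible S ε t χ g) :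
    ∃ f : Fin n → ℝ →₀ ℝ, IsPredictor f ∧ ECE S t f ≤ ε ∧ ∀ U, LPobj U χ = payoffEI S U f := by
  obtain ⟨hχ, hχsupp, hcost, hmargQ, hg, hmpc⟩ := h
  obtain ⟨G, hG, hcal, rfl⟩ := exists_perfectlyCalibrated_of_mpcPrior hg hmpc
  have hmarg : mapDomain Prod.fst χ = marginalDist S G :=
    Finsupp.ext fun q => by rw [← planMargQ_eq_mapDomain_fst, hmargQ]
  have hsnd : ∀ x ∈ χ.support, x.2 ∈ Set.Icc (0 : ℝ) 1 := fun x hx => (hχsupp x hx).2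
  refine ⟨generated S G χ, isPredictor_generated hG hχ hsnd hmarg,
    ece_generated_le hG hcal hχ hsnd hmarg ht hε hcost, fun U => ?_⟩
  rw [payoffEI_eq_linearCombination, marginalDist_generated hχ hmarg,
    Finsupp.linearCombination_mapDomain]
  rfl

end Plans

theorem statement4_general {n : ℕ} (S : Setup n) (t ε : ℝ) (ht : 1 ≤ t) (hε : 0 ≤ ε)
    (U : ℝ → ℝ) :
    {v | ∃ f : Fin n → ℝ →₀ ℝ, (IsPredictor f ∧ ECE S t f ≤ ε) ∧ v = payoffEI S U f}
      = {v | ∃ (χ : ℝ × ℝ →₀ ℝ) (g : ℝ →₀ ℝ), LPFeasible S ε t χ g ∧ v = LPobj U χ} := by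
  ext v
  constructor
  · rintro ⟨f, ⟨hf, hece⟩, rfl⟩
    exact ⟨_, _, lpFeasible_calibrationPlan hf (zero_lt_one.trans_le ht) hε hece,
      (lpObj_calibrationPlan S f U).symm⟩
  · rintro ⟨χ, g, hfeas, rfl⟩
    obtain ⟨f, hf, hece, hobj⟩ := exists_predictor_of_lpFeasible ht hε hfeas
    exact ⟨f, ⟨hf, hece⟩, hobj U⟩

/-- In the event-independent setting, the supremum of the principal's
payoff over all finitely supported `(ε, ℓ_t)`-calibrated predictors equals the optimal
value of LP-TwoStep. -/
theorem statement4 {n : ℕ} (S : Setup n) (t ε : ℝ) (ht : 1 ≤ t) (hε : 0 ≤ ε)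
    (U : ℝ → ℝ) (hU0 : ∀ p ∈ Set.Icc (0 : ℝ) 1, 0 ≤ U p) :
    sSup {v | ∃ f : Fin n → ℝ →₀ ℝ,
        (IsPredictor f ∧ ECE S t f ≤ ε) ∧ v = payoffEI S U f}
      = OPTLP S ε t U :=
  congrArg sSup (statement4_general S t ε ht hε U)

end PersuasiveCalibration
end
end

section
/- Fix the event-independent setting with t = 1 and ECE budget ε ≥ 0, and assume the indirect utility U : [0,1] → [0,∞) is upper semicontinuous. Then there exist thresholds 0 ≤ p_L ≤ p_H ≤ 1, a slope α ≥ 0, and a finitely supported (ε,ℓ_1)-calibrated predictor f* that is optimal (V(f*) ≥ V(f) for every finitely supported (ε,ℓ_1)-calibrated predictor f) such that: (1) Miscalibration structure: for every p ∈ supp(f*), if p ∈ [0,p_L] then p ≤ κ(p); if p ∈ [p_L,p_H] then p = κ(p); and if p ∈ [p_H,1] then p ≥ κ(p). (2) Payoff structure: the points (p, U(p)) for p ∈ supp(f*) lie on the graph of a convex function, i.e., for all p_1 < p_2 < p_3 in supp(f*) one has (p_3−p_1)·U(p_2) ≤ (p_3−p_2)·U(p_1) + (p_2−p_1)·U(p_3);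 moreover U(p') − U(p) = α·(p'−p) for all p, p' ∈ supp(f*) ∩ [p_H,1], and U(p') − U(p) = −α·(p'−p) for all p, p' ∈ supp(f*) ∩ [0,p_L]. -/
open Finset

noncomputable section

namespace PersuasiveCalibration

variable {n : ℕ}

variable {A σT : Type*}

/-!
The signed error `f(q) * (κ(q) - q)` is linear in the predictor, so the `ℓ_1` error is convex while
the payoff is linear. By Carathéodory's theorem every predictor can be replaced by one using a
bounded number of predictions without changing the payoff or the error; compactness then yields an
optimal predictor, chosen with the least error among the optimal ones. Its structure follows from
moving a fraction of the probability of one prediction to another: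

* pooling two predictions into an intermediate one in the proportions that preserve the mean does
  not raise the error, hence the payoffs on the support are convex;
* moving mass between an over-confident prediction and a larger under-confident one lowers the
  error, and does not lower the payoff in one of the two directions, hence the under-confident
  predictions lie below the over-confident ones;
* if the error is positive, the budget constraint has a Lagrange multiplier `α`. Moving mass between
  two predictions with errors of the same sign changes the error at unit rate per unit of distance,
  so first-order optimality forces the payoffs on each tail onto a line of slope `±α`.
-/

open scoped Topology

section General

section Semicontinuity

variable {X : Type*} [TopologicalSpace X] {s : Set X}

lemma upperSemicontinuousOn_continuousOn_mul {c h : X → ℝ} (hc : ContinuousOn c s)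
    (hc0 : ∀ x ∈ s, 0 ≤ c x) (hh : UpperSemicontinuousOn h s) :
    UpperSemicontinuousOn (fun x => c x * h x) s := by
  intro x hx r hr
  obtain ⟨u, hur, hu⟩ : ∃ u, c x * u < r ∧ h x < u := by
    have hcont : Continuous fun u => c x * u := by fun_prop
    have hnear : ∀ᶠ u in 𝓝[>] h x, c x * u < r :=
      (hcont.tendsto _).eventually_lt_const hr |>.filter_mono nhdsWithin_le_nhds
    exact (hnear.and self_mem_nhdsWithin).exists
  have hcu : ∀ᶠ z in 𝓝[s] x, c z * u < r :=
    ((hc x hx).mul_const u).eventually_lt_const hur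
  filter_upwards [hh x hx u hu, hcu, self_mem_nhdsWithin] with z hhz hcz hz
  exact (mul_le_mul_of_nonneg_left hhz.le (hc0 z hz)).trans_lt hcz

lemma exists_isMaxOn_forall_le_of_tie {v c : X → ℝ} (hs : IsCompact s) (hne : s.Nonempty)
    (hv : UpperSemicontinuousOn v s) (hc : ContinuousOn c s) :
    ∃ x ∈ s, IsMaxOn v s x ∧ ∀ y ∈ s, v x ≤ v y → c x ≤ c y := by
  obtain ⟨x₀, hx₀, hmax⟩ := hv.exists_isMaxOn hne hs
  obtain ⟨x, hx, hmin⟩ := (hv.isCompact_inter_preimage_Ici hs (v x₀)).exists_isMinOn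
    ⟨x₀, hx₀, le_refl (v x₀)⟩ (hc.mono Set.inter_subset_left)
  have hvx : v x₀ ≤ v x := hx.2
  exact ⟨x, hx.1, fun y hy => (hmax hy).trans hvx, fun y hy hxy => hmin ⟨hy, hvx.trans hxy⟩⟩

end Semicontinuity

section Convexity

/- Carathéodory's theorem applied to the average of the `v p`, rescaled by the number of terms and
padded with zero weights. -/
lemma exists_fin_sum_smul_eq_sum {E β : Type*} [AddCommGroup E] [Module ℝ E]
    [FiniteDimensional ℝ E] {T : Finset β} (hT : T.Nonempty) (v : β → E) :
    ∃ (r : Fin (Module.finrank ℝ E + 1) → β) (w : Fin (Module.finrank ℝ E + 1) → ℝ),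
      (∀ j, r j ∈ T) ∧ (∀ j, 0 ≤ w j) ∧ ∑ j, w j • v (r j) = ∑ p ∈ T, v p := by
  obtain ⟨p₀, hp₀⟩ := id hT
  have hcard : (0 : ℝ) < #T := by exact_mod_cast hT.card_pos
  have hmean : ∑ p ∈ T, (#T : ℝ)⁻¹ • v p ∈ convexHull ℝ (v '' T) :=
    (convex_convexHull ℝ _).sum_mem (fun _ _ => by positivity) (by simp [hcard.ne'])
      fun p hp => subset_convexHull ℝ _ ⟨p, hp, rfl⟩
  obtain ⟨ι, _, z, w, hz, hindep, hw, -, hsum⟩ := eq_pos_convex_span_of_mem_convexHull hmean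
  obtain ⟨e⟩ : Nonempty (ι ↪ Fin (Module.finrank ℝ E + 1)) := by
    refine Function.Embedding.nonempty_of_card_le ?_
    rw [Fintype.card_fin]
    exact hindep.card_le_finrank_succ.trans
      (Nat.succ_le_succ (Submodule.finrank_le (vectorSpan ℝ (Set.range z))))
  choose r hrT hrz using fun j => hz ⟨j, rfl⟩
  refine ⟨Function.extend e r fun _ => p₀, Function.extend e (fun j => #T * w j) 0,
    fun k => ?_, fun k => ?_, ?_⟩
  · rcases em (∃ j, e j = k) with ⟨j, rfl⟩ | hk
    · simpa only [e.injective.extend_apply] using Finset.mem_coe.1 (hrT j)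
    · simpa only [Function.extend_apply' _ _ _ hk] using hp₀
  · rcases em (∃ j, e j = k) with ⟨j, rfl⟩ | hk
    · simpa only [e.injective.extend_apply] using mul_nonneg hcard.le (hw j).le
    · simp only [Function.extend_apply' _ _ _ hk, Pi.zero_apply, le_refl]
  · calc ∑ k, Function.extend e (fun j => #T * w j) 0 k • v (Function.extend e r (fun _ => p₀) k)
        = ∑ j, (#T * w j) • v (r j) := by
          refine (Fintype.sum_of_injective e e.injective _ _ (fun k hk => ?_) fun j => ?_).symm
          · simp only [Function.extend_apply' _ _ _ hk, Pi.zero_apply, zero_smul]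
          · simp only [e.injective.extend_apply]
      _ = (#T : ℝ) • ∑ p ∈ T, (#T : ℝ)⁻¹ • v p := by
          simp only [hrz, mul_smul, ← Finset.smul_sum, hsum]
      _ = ∑ p ∈ T, v p := by rw [← Finset.smul_sum, smul_inv_smul₀ hcard.ne']

variable {E : Type*} [AddCommMonoid E] [SMul ℝ E] {P : Set E} {V C : E → ℝ} {ε : ℝ} {x : E}

lemma slope_le_slope_of_isMax_constrained (hV : ConcaveOn ℝ P V) (hC : ConvexOn ℝ P C)
    (hmax : ∀ y ∈ P, C y ≤ ε → V y ≤ V x) {y z : E} (hy : y ∈ P) (hz : z ∈ P)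
    (hyε : ε < C y) (hzε : C z < ε) :
    (V y - V x) / (C y - ε) ≤ (V x - V z) / (ε - C z) := by
  have hD : 0 < C y - C z := by linarith
  set a := (ε - C z) / (C y - C z) with ha
  set b := (C y - ε) / (C y - C z) with hb
  have ha0 : 0 ≤ a := div_nonneg (by linarith) hD.le
  have hb0 : 0 ≤ b := div_nonneg (by linarith) hD.le
  have hab : a + b = 1 := by rw [ha, hb]; field_simp; ring
  have hmix : C (a • y + b • z) ≤ ε := by
    refine (hC.2 hy hz ha0 hb0 hab).trans (le_of_eq ?_)
    rw [ha, hb, smul_eq_mul, smul_eq_mul]; field_simp; ring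
  have hVmix : a * V y + b * V z ≤ V x :=
    (hV.2 hy hz ha0 hb0 hab).trans (hmax _ (hV.1 hy hz ha0 hb0 hab) hmix)
  have hVmix' : (ε - C z) * V y + (C y - ε) * V z ≤ (C y - C z) * V x := by
    calc _ = (C y - C z) * (a * V y + b * V z) := by rw [ha, hb]; field_simp
      _ ≤ _ := mul_le_mul_of_nonneg_left hVmix hD.le
  rw [div_le_div_iff₀ (by linarith) (by linarith)]
  linarith

/- `α` is a supergradient at `ε` of the value of the constrained problem: it separates the slopes
towards points that violate the constraint from the slopes towards Slater points. -/
lemma exists_lagrange_multiplier (hV : ConcaveOn ℝ P V) (hC : ConvexOn ℝ P C)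
    (hslater : ∃ z ∈ P, C z < ε) (hxε : C x ≤ ε) (hmax : ∀ y ∈ P, C y ≤ ε → V y ≤ V x) :
    ∃ α, 0 ≤ α ∧ ∀ y ∈ P, V y - α * C y ≤ V x - α * C x := by
  obtain ⟨z₀, hz₀, hz₀ε⟩ := hslater
  obtain ⟨α, hα_ge, hα_le⟩ := exists_between_of_forall_le
    (s := insert 0 {r | ∃ y ∈ P, ε < C y ∧ r = (V y - V x) / (C y - ε)})
    (t := {r | ∃ z ∈ P, C z < ε ∧ r = (V x - V z) / (ε - C z)})
    ⟨0, Set.mem_insert _ _⟩ ⟨_, z₀, hz₀, hz₀ε, rfl⟩ (by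
      rintro _ (rfl | ⟨y, hy, hyε, rfl⟩) _ ⟨z, hz, hzε, rfl⟩
      · exact div_nonneg (sub_nonneg.2 (hmax z hz hzε.le)) (by linarith)
      · exact slope_le_slope_of_isMax_constrained hV hC hmax hy hz hyε hzε)
  have hα : 0 ≤ α := hα_ge (Set.mem_insert _ _)
  have hline : ∀ y ∈ P, V y ≤ V x + α * (C y - ε) := by
    intro y hy
    rcases lt_trichotomy (C y) ε with hlt | heq | hgt
    · have := hα_le ⟨y, hy, hlt, rfl⟩
      rw [le_div_iff₀ (by linarith)] at this
      linarith
    · simpa [heq] using hmax y hy heq.le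
    · have := hα_ge (Set.mem_insert_of_mem _ ⟨y, hy, hgt, rfl⟩)
      rw [div_le_iff₀ (by linarith)] at this
      linarith
  refine ⟨α, hα, fun y hy => ?_⟩
  linarith [hline y hy, mul_le_mul_of_nonneg_left hxε hα]

end Convexity

section Order

lemma exists_threshold_of_forall_lt {α : Type*} [LinearOrder α] [DenselyOrdered α] (F : Finset α)
    (Q : α → Prop) {l m : α} (hlm : l ≤ m) (hF : ∀ p ∈ F, l ≤ p) (hQ : ∀ p ∈ F, Q p → p < m) :
    ∃ x, l ≤ x ∧ x ≤ m ∧ (∀ p ∈ F, Q p → p < x) ∧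
      ((∀ p ∈ F, p ≤ x → p = l) ∨ ∃ b ∈ F, Q b ∧ ∀ p ∈ F, p ≤ x → p ≤ b) := by
  classical
  rcases {p ∈ F | Q p}.eq_empty_or_nonempty with hempty | hne
  · have hnot : ∀ p ∈ F, ¬Q p := Finset.filter_eq_empty_iff.1 hempty
    exact ⟨l, le_rfl, hlm, fun p hp hQp => absurd hQp (hnot p hp),
      Or.inl fun p hp hpl => hpl.antisymm (hF p hp)⟩
  · obtain ⟨b, hb, hbmax⟩ := Finset.exists_max_image {p ∈ F | Q p} id hne
    simp only [Finset.mem_filter, id_eq] at hb hbmax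
    obtain ⟨x, hbx, hx⟩ := Finset.exists_between (s := {b}) (t := insert m {p ∈ F | b < p})
      (Finset.singleton_nonempty b) (Finset.insert_nonempty _ _) (by
        simpa using hQ b hb.1 hb.2)
    simp only [Finset.mem_singleton, forall_eq, Finset.mem_insert, Finset.mem_filter] at hbx hx
    exact ⟨x, (hF b hb.1).trans hbx.le, (hx m (Or.inl rfl)).le,
      fun p hp hQp => (hbmax p ⟨hp, hQp⟩).trans_lt hbx,
      Or.inr ⟨b, hb.1, hb.2, fun p hp hpx =>
        le_of_not_gt fun hbp => (hx p (Or.inr ⟨hp, hbp⟩)).not_ge hpx⟩⟩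

lemma exists_threshold_of_forall_gt {α : Type*} [LinearOrder α] [DenselyOrdered α] (F : Finset α)
    (Q : α → Prop) {l m : α} (hlm : l ≤ m) (hF : ∀ p ∈ F, p ≤ m) (hQ : ∀ p ∈ F, Q p → l < p) :
    ∃ x, l ≤ x ∧ x ≤ m ∧ (∀ p ∈ F, Q p → x < p) ∧
      ((∀ p ∈ F, x ≤ p → p = m) ∨ ∃ b ∈ F, Q b ∧ ∀ p ∈ F, x ≤ p → b ≤ p) := by
  obtain ⟨x, hxm, hlx, htail⟩ :=
    exists_threshold_of_forall_lt (α := αᵒᵈ) (l := m) (m := l) F Q hlm hF hQ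
  exact ⟨x, hlx, hxm, htail⟩

lemma exists_pos_le_one_add_mul_nonneg {x : ℝ} (hx : 0 < x) (y : ℝ) :
    ∃ s, 0 < s ∧ s ≤ 1 ∧ 0 ≤ x + s * y := by
  have hlim : Filter.Tendsto (fun s => x + s * y) (𝓝[>] 0) (𝓝 (x + 0 * y)) :=
    Continuous.tendsto (by fun_prop) 0 |>.mono_left nhdsWithin_le_nhds
  have hnear : ∀ᶠ s in 𝓝[>] 0, 0 < x + s * y :=
    hlim.eventually_const_lt (by simpa using hx)
  obtain ⟨s, hs, hs0, hs1⟩ := (hnear.and (Ioc_mem_nhdsGT one_pos)).exists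
  exact ⟨s, hs0, hs1, hs.le⟩

end Order

end General

section Predictors

variable {S : Setup n} {f : Fin n → ℝ →₀ ℝ} {p q : ℝ}

lemma mem_suppF : q ∈ suppF f ↔ ∃ i, f i q ≠ 0 := by
  simp [suppF]

lemma apply_eq_zero_of_notMem_suppF (hq : q ∉ suppF f) (i : Fin n) : f i q = 0 := by
  by_contra hne
  exact hq (mem_suppF.2 ⟨i, hne⟩)

lemma isDist_iff {μ : ℝ →₀ ℝ} :
    IsDist μ ↔ (∀ p, 0 ≤ μ p) ∧ (∀ p ∉ Set.Icc (0 : ℝ) 1, μ p = 0) ∧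
      Finsupp.linearCombination ℝ (fun _ => (1 : ℝ)) μ = 1 := by
  have hsupp : (∀ p ∈ μ.support, p ∈ Set.Icc (0 : ℝ) 1) ↔ ∀ p ∉ Set.Icc (0 : ℝ) 1, μ p = 0 :=
    forall_congr' fun p => by rw [Finsupp.mem_support_iff, not_imp_comm]
  simp only [IsDist, hsupp, Finsupp.linearCombination_apply, Finsupp.sum, smul_eq_mul, mul_one]

namespace IsPredictor

lemma marginal_pos (hf : IsPredictor f) (S : Setup n) (hq : q ∈ suppF f) :
    0 < marginal S f q := by
  obtain ⟨i, hi⟩ := mem_suppF.1 hq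
  exact Finset.sum_pos' (fun j _ => mul_nonneg (S.lam_pos j).le ((hf j).1 q))
    ⟨i, Finset.mem_univ i, mul_pos (S.lam_pos i) (((hf i).1 q).lt_of_ne' hi)⟩

lemma mem_Icc (hf : IsPredictor f) (hq : q ∈ suppF f) : q ∈ Set.Icc (0 : ℝ) 1 := by
  obtain ⟨i, hi⟩ := mem_suppF.1 hq
  exact (hf i).2.1 q (Finsupp.mem_support_iff.2 hi)

lemma sum_suppF_s5 (hf : IsPredictor f) (i : Fin n) : ∑ p ∈ suppF f, f i p = 1 := by
  rw [← (hf i).2.2]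
  refine (Finset.sum_subset (Finset.subset_biUnion_of_mem (fun i => (f i).support)
    (Finset.mem_univ i)) fun q _ hq => ?_).symm
  exact Finsupp.notMem_support_iff.1 hq

lemma suppF_nonempty (hf : IsPredictor f) (S : Setup n) : (suppF f).Nonempty := by
  by_contra hempty
  have hfsum := hf.sum_suppF_s5
  simp only [Finset.not_nonempty_iff_eq_empty.1 hempty, Finset.sum_empty, zero_ne_one] at hfsum
  have : IsEmpty (Fin n) := ⟨hfsum⟩
  simpa using S.lam_sum

end IsPredictor

lemma payoffEI_eq_sum_linearCombination (S : Setup n) (U : ℝ → ℝ) (f : Fin n → ℝ →₀ ℝ) :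
    payoffEI S U f = ∑ i, S.lam i * Finsupp.linearCombination ℝ U (f i) := by
  simp only [payoffEI, payoff, Finsupp.linearCombination_apply, Finsupp.sum, smul_eq_mul]

lemma payoffEI_eq_sum_suppF (S : Setup n) (U : ℝ → ℝ) (f : Fin n → ℝ →₀ ℝ) :
    payoffEI S U f = ∑ p ∈ suppF f, marginal S f p * U p := by
  have hsupp : ∀ i, ∑ p ∈ (f i).support, f i p * U p = ∑ p ∈ suppF f, f i p * U p := fun i =>
    Finset.sum_subset (Finset.subset_biUnion_of_mem (fun i => (f i).support) (Finset.mem_univ i))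
      fun q _ hq => by rw [Finsupp.notMem_support_iff.1 hq, zero_mul]
  simp only [payoffEI, payoff, hsupp, marginal, Finset.mul_sum, Finset.sum_mul, ← mul_assoc]
  exact Finset.sum_comm

/-- The signed calibration error at the prediction `q`, weighted by its probability: the quantity
`f(q) * (κ(q) - q)`, written without the division in `κ` so that it is linear in the predictor. -/
def calibrationGap (S : Setup n) (f : Fin n → ℝ →₀ ℝ) (q : ℝ) : ℝ :=
  ∑ i, S.lam i * f i q * (S.theta i - q)

/-- The `ℓ_1` calibration error, as the total absolute calibration gap. It agrees with `ECE S 1` on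
predictors and is convex. -/
def calibrationCost (S : Setup n) (f : Fin n → ℝ →₀ ℝ) : ℝ :=
  ∑ q ∈ suppF f, |calibrationGap S f q|

lemma calibrationGap_eq_zero_of_notMem_suppF (S : Setup n) (hq : q ∉ suppF f) :
    calibrationGap S f q = 0 := by
  simp [calibrationGap, apply_eq_zero_of_notMem_suppF hq]

lemma calibrationCost_eq_sum_of_subset (S : Setup n) {T : Finset ℝ} (hT : suppF f ⊆ T) :
    calibrationCost S f = ∑ q ∈ T, |calibrationGap S f q| :=
  Finset.sum_subset hT fun q _ hq => by
    rw [calibrationGap_eq_zero_of_notMem_suppF S hq, abs_zero]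

lemma calibrationCost_pos_of_calibrationGap_ne_zero (hp : calibrationGap S f p ≠ 0) :
    0 < calibrationCost S f :=
  Finset.sum_pos' (fun _ _ => abs_nonneg _)
    ⟨p, not_imp_comm.1 (calibrationGap_eq_zero_of_notMem_suppF S) hp, abs_pos.2 hp⟩

namespace IsPredictor

lemma calibrationGap_eq (hf : IsPredictor f) (S : Setup n) (hq : q ∈ suppF f) :
    calibrationGap S f q = marginal S f q * (kappa S f q - q) := by
  rw [mul_sub, kappa, mul_div_cancel₀ _ (hf.marginal_pos S hq).ne', calibrationGap, marginal,
    Finset.sum_mul, ← Finset.sum_sub_distrib]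
  exact Finset.sum_congr rfl fun i _ => by ring

lemma ECE_one_eq_calibrationCost (hf : IsPredictor f) (S : Setup n) :
    ECE S 1 f = calibrationCost S f := by
  simp only [ECE, Real.rpow_one, div_one, calibrationCost]
  refine Finset.sum_congr rfl fun q hq => ?_
  rw [hf.calibrationGap_eq S hq, abs_mul, abs_of_pos (hf.marginal_pos S hq)]

lemma le_kappa (hf : IsPredictor f) (hq : q ∈ suppF f) (hgap : 0 ≤ calibrationGap S f q) :
    q ≤ kappa S f q := by
  rw [hf.calibrationGap_eq S hq] at hgap
  exact sub_nonneg.1 (nonneg_of_mul_nonneg_right hgap (hf.marginal_pos S hq))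

lemma kappa_le (hf : IsPredictor f) (hq : q ∈ suppF f) (hgap : calibrationGap S f q ≤ 0) :
    kappa S f q ≤ q := by
  rw [hf.calibrationGap_eq S hq] at hgap
  exact sub_nonpos.1 (nonpos_of_mul_nonpos_right hgap (hf.marginal_pos S hq))

lemma calibrationGap_zero_nonneg (hf : IsPredictor f) (S : Setup n) :
    0 ≤ calibrationGap S f 0 :=
  Finset.sum_nonneg fun i _ => mul_nonneg (mul_nonneg (S.lam_pos i).le ((hf i).1 0))
    (sub_nonneg.2 (S.theta_mem i).1)

lemma calibrationGap_one_nonpos (hf : IsPredictor f) (S : Setup n) :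
    calibrationGap S f 1 ≤ 0 :=
  Finset.sum_nonpos fun i _ => mul_nonpos_of_nonneg_of_nonpos
    (mul_nonneg (S.lam_pos i).le ((hf i).1 1)) (sub_nonpos.2 (S.theta_mem i).2)

end IsPredictor

/-- The fully informative predictor, which announces `θ_i` in event `i` and hence is perfectly
calibrated. -/
def fullInfo (S : Setup n) : Fin n → ℝ →₀ ℝ := fun i => Finsupp.single (S.theta i) 1

lemma isPredictor_fullInfo (S : Setup n) : IsPredictor (fullInfo S) := by
  intro i
  refine isDist_iff.2 ⟨fun p => ?_, fun p hp => ?_, by simp [fullInfo]⟩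
  · exact Finsupp.single_nonneg.2 zero_le_one p
  · exact Finsupp.single_eq_of_ne fun h => hp (h ▸ S.theta_mem i)

lemma calibrationCost_fullInfo (S : Setup n) : calibrationCost S (fullInfo S) = 0 := by
  refine Finset.sum_eq_zero fun q _ => abs_eq_zero.2 (Finset.sum_eq_zero fun i _ => ?_)
  rcases eq_or_ne q (S.theta i) with rfl | hq
  · rw [sub_self, mul_zero]
  · rw [fullInfo, Finsupp.single_eq_of_ne hq, mul_zero, zero_mul]

end Predictors

section Convexity

variable (n) in
lemma convex_setOf_isPredictor : Convex ℝ {f : Fin n → ℝ →₀ ℝ | IsPredictor f} := by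
  intro f hf g hg a b ha hb hab i
  obtain ⟨hf0, hfI, hfsum⟩ := isDist_iff.1 (hf i)
  obtain ⟨hg0, hgI, hgsum⟩ := isDist_iff.1 (hg i)
  refine isDist_iff.2 ⟨fun p => ?_, fun p hp => ?_, ?_⟩
  · exact add_nonneg (mul_nonneg ha (hf0 p)) (mul_nonneg hb (hg0 p))
  · simp [hfI p hp, hgI p hp]
  · simp only [Pi.add_apply, Pi.smul_apply, map_add, map_smul, hfsum, hgsum]
    simpa using hab

lemma concaveOn_payoffEI (S : Setup n) (U : ℝ → ℝ) :
    ConcaveOn ℝ {f | IsPredictor f} (payoffEI S U) := by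
  refine ⟨convex_setOf_isPredictor n, fun f _ g _ a b _ _ _ => le_of_eq ?_⟩
  simp only [payoffEI_eq_sum_linearCombination, Pi.add_apply, Pi.smul_apply, map_add, map_smul,
    smul_eq_mul, Finset.mul_sum, ← Finset.sum_add_distrib]
  exact Finset.sum_congr rfl fun i _ => by ring

lemma calibrationGap_add_smul (S : Setup n) (f g : Fin n → ℝ →₀ ℝ) (a b q : ℝ) :
    calibrationGap S (a • f + b • g) q = a * calibrationGap S f q + b * calibrationGap S g q := by
  simp only [calibrationGap, Finset.mul_sum, ← Finset.sum_add_distrib]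
  exact Finset.sum_congr rfl fun i _ => by
    simp only [Pi.add_apply, Pi.smul_apply, Finsupp.add_apply, Finsupp.smul_apply, smul_eq_mul]
    ring

lemma suppF_add_smul_subset (f g : Fin n → ℝ →₀ ℝ) (a b : ℝ) :
    suppF (a • f + b • g) ⊆ suppF f ∪ suppF g := by
  intro q hq
  by_contra hnot
  rw [Finset.mem_union, not_or] at hnot
  obtain ⟨i, hi⟩ := mem_suppF.1 hq
  exact hi (by simp [apply_eq_zero_of_notMem_suppF hnot.1, apply_eq_zero_of_notMem_suppF hnot.2])

lemma convexOn_calibrationCost (S : Setup n) :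
    ConvexOn ℝ {f | IsPredictor f} (calibrationCost S) := by
  refine ⟨convex_setOf_isPredictor n, fun f _ g _ a b ha hb _ => ?_⟩
  rw [calibrationCost_eq_sum_of_subset S (suppF_add_smul_subset f g a b),
    calibrationCost_eq_sum_of_subset S (f := f) Finset.subset_union_left,
    calibrationCost_eq_sum_of_subset S (f := g) Finset.subset_union_right, smul_eq_mul,
    smul_eq_mul, Finset.mul_sum, Finset.mul_sum, ← Finset.sum_add_distrib]
  refine Finset.sum_le_sum fun q _ => ?_
  rw [calibrationGap_add_smul]
  refine (abs_add_le _ _).trans_eq ?_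
  rw [abs_mul, abs_mul, abs_of_nonneg ha, abs_of_nonneg hb]

end Convexity

section Transfer

/-- The predictor obtained from `f` by announcing `b` instead of `a` with probability `s`, whatever
the event. -/
def transfer (f : Fin n → ℝ →₀ ℝ) (a b s : ℝ) : Fin n → ℝ →₀ ℝ := fun i =>
  f i + (Finsupp.single b (s * f i a) - Finsupp.single a (s * f i a))

variable {S : Setup n} {f : Fin n → ℝ →₀ ℝ} {a b s q : ℝ}

lemma transfer_self (f : Fin n → ℝ →₀ ℝ) (a s : ℝ) : transfer f a a s = f := by
  funext i
  simp [transfer]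

lemma transfer_apply_source (hab : a ≠ b) (i : Fin n) :
    transfer f a b s i a = (1 - s) * f i a := by
  simp only [transfer, Finsupp.add_apply, Finsupp.sub_apply, Finsupp.single_eq_same,
    Finsupp.single_eq_of_ne hab]
  ring

lemma transfer_apply_target (hab : a ≠ b) (i : Fin n) :
    transfer f a b s i b = f i b + s * f i a := by
  simp [transfer, hab]

lemma transfer_apply_of_ne (hqa : q ≠ a) (hqb : q ≠ b) (i : Fin n) :
    transfer f a b s i q = f i q := by
  simp [transfer, hqa.symm, hqb.symm]

lemma IsPredictor.transfer (hf : IsPredictor f) (hb : b ∈ Set.Icc (0 : ℝ) 1)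
    (hs : s ∈ Set.Icc (0 : ℝ) 1) : IsPredictor (transfer f a b s) := by
  rcases eq_or_ne a b with rfl | hab
  · rwa [transfer_self]
  intro i
  obtain ⟨hf0, hfI, hfsum⟩ := isDist_iff.1 (hf i)
  refine isDist_iff.2 ⟨fun p => ?_, fun p hp => ?_, ?_⟩
  · rcases eq_or_ne p a with rfl | hpa
    · rw [transfer_apply_source hab]
      exact mul_nonneg (sub_nonneg.2 hs.2) (hf0 p)
    rcases eq_or_ne p b with rfl | hpb
    · rw [transfer_apply_target hab]
      exact add_nonneg (hf0 p) (mul_nonneg hs.1 (hf0 a))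
    · rw [transfer_apply_of_ne hpa hpb]
      exact hf0 p
  · have hpb : p ≠ b := fun h => hp (h ▸ hb)
    rcases eq_or_ne p a with rfl | hpa
    · rw [transfer_apply_source hab, hfI p hp, mul_zero]
    · rw [transfer_apply_of_ne hpa hpb, hfI p hp]
  · rw [PersuasiveCalibration.transfer, map_add, map_sub, Finsupp.linearCombination_single,
      Finsupp.linearCombination_single, hfsum, sub_self, add_zero]

lemma payoffEI_transfer (S : Setup n) (U : ℝ → ℝ) (f : Fin n → ℝ →₀ ℝ) (a b s : ℝ) :
    payoffEI S U (transfer f a b s) = payoffEI S U f + s * marginal S f a * (U b - U a) := by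
  simp only [payoffEI_eq_sum_linearCombination, transfer, map_add, map_sub,
    Finsupp.linearCombination_single, smul_eq_mul, marginal, Finset.mul_sum, Finset.sum_mul,
    ← Finset.sum_add_distrib]
  exact Finset.sum_congr rfl fun i _ => by ring

lemma marginal_transfer_of_ne (hqa : q ≠ a) (hqb : q ≠ b) :
    marginal S (transfer f a b s) q = marginal S f q := by
  simp only [marginal, transfer_apply_of_ne hqa hqb]

lemma calibrationGap_transfer_of_ne (hqa : q ≠ a) (hqb : q ≠ b) :
    calibrationGap S (transfer f a b s) q = calibrationGap S f q := by
  simp only [calibrationGap, transfer_apply_of_ne hqa hqb]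

lemma calibrationGap_transfer_source (hab : a ≠ b) :
    calibrationGap S (transfer f a b s) a = (1 - s) * calibrationGap S f a := by
  simp only [calibrationGap, transfer_apply_source hab, Finset.mul_sum]
  exact Finset.sum_congr rfl fun i _ => by ring

lemma calibrationGap_transfer_target (hab : a ≠ b) :
    calibrationGap S (transfer f a b s) b =
      calibrationGap S f b + s * (calibrationGap S f a + marginal S f a * (a - b)) := by
  simp only [calibrationGap, transfer_apply_target hab, marginal, Finset.mul_sum, Finset.sum_mul,
    ← Finset.sum_add_distrib]
  exact Finset.sum_congr rfl fun i _ => by ring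

lemma calibrationCost_transfer (S : Setup n) (f : Fin n → ℝ →₀ ℝ) (a b : ℝ)
    (hs : s ∈ Set.Icc (0 : ℝ) 1) :
    calibrationCost S (transfer f a b s) =
      calibrationCost S f - s * |calibrationGap S f a| - |calibrationGap S f b| +
        |calibrationGap S f b + s * (calibrationGap S f a + marginal S f a * (a - b))| := by
  rcases eq_or_ne a b with rfl | hab
  · rw [transfer_self, sub_self, mul_zero, add_zero, ← one_add_mul, abs_mul,
      abs_of_nonneg (add_nonneg zero_le_one hs.1)]
    ring
  set T := {a, b} ∪ (suppF f ∪ suppF (transfer f a b s))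
  have habT : {a, b} ⊆ T := Finset.subset_union_left
  have hrest : ∑ q ∈ T \ {a, b}, |calibrationGap S (transfer f a b s) q| =
      ∑ q ∈ T \ {a, b}, |calibrationGap S f q| := by
    refine Finset.sum_congr rfl fun q hq => ?_
    simp only [Finset.mem_sdiff, Finset.mem_insert, Finset.mem_singleton, not_or] at hq
    rw [calibrationGap_transfer_of_ne hq.2.1 hq.2.2]
  rw [calibrationCost_eq_sum_of_subset S (f := f) (T := T) (by grind),
    calibrationCost_eq_sum_of_subset S (f := transfer f a b s) (T := T) (by grind),
    ← Finset.sum_sdiff habT, ← Finset.sum_sdiff habT, hrest, Finset.sum_pair hab,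
    Finset.sum_pair hab, calibrationGap_transfer_source hab, calibrationGap_transfer_target hab,
    abs_mul, abs_of_nonneg (sub_nonneg.2 hs.2)]
  ring

/- If the gap at the target keeps the sign `σ`, then the cost is affine in `s`. -/
lemma calibrationCost_transfer_of_sign {σ : ℝ} (hσ : |σ| = 1) (hs : s ∈ Set.Icc (0 : ℝ) 1)
    (hb : 0 ≤ σ * calibrationGap S f b)
    (hb' : 0 ≤ σ *
      (calibrationGap S f b + s * (calibrationGap S f a + marginal S f a * (a - b)))) :
    calibrationCost S (transfer f a b s) = calibrationCost S f - s * |calibrationGap S f a| +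
      σ * (s * (calibrationGap S f a + marginal S f a * (a - b))) := by
  have habs : ∀ x : ℝ, 0 ≤ σ * x → |x| = σ * x := fun x hx => by
    rw [← abs_of_nonneg hx, abs_mul, hσ, one_mul]
  rw [calibrationCost_transfer S f a b hs, habs _ hb, habs _ hb']
  ring

lemma calibrationCost_pool_le {c t : ℝ} (hab : a ≠ b) (hcb : c ≠ b) (hac : a ≠ c)
    (hs : s ∈ Set.Icc (0 : ℝ) 1) (ht : t ∈ Set.Icc (0 : ℝ) 1)
    (hmean : s * marginal S f a * (a - b) + t * marginal S f c * (c - b) = 0) :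
    calibrationCost S (transfer (transfer f a b s) c b t) ≤ calibrationCost S f := by
  have hgap : calibrationGap S f b + s * (calibrationGap S f a + marginal S f a * (a - b)) +
      t * (calibrationGap S f c + marginal S f c * (c - b)) =
      calibrationGap S f b + s * calibrationGap S f a + t * calibrationGap S f c := by
    linear_combination hmean
  have habs := abs_add_three (calibrationGap S f b) (s * calibrationGap S f a)
    (t * calibrationGap S f c)
  rw [abs_mul, abs_mul, abs_of_nonneg hs.1, abs_of_nonneg ht.1] at habs
  rw [calibrationCost_transfer _ _ _ _ ht, calibrationGap_transfer_target hab,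
    calibrationGap_transfer_of_ne hac.symm hcb, marginal_transfer_of_ne hac.symm hcb, hgap,
    calibrationCost_transfer _ _ _ _ hs]
  linarith

end Transfer

section Optimality

/-- `f` solves the principal's problem: it maximizes the payoff among the `(ε, ℓ_1)`-calibrated
predictors. -/
structure IsOptimal (S : Setup n) (U : ℝ → ℝ) (ε : ℝ) (f : Fin n → ℝ →₀ ℝ) : Prop where
  isPredictor : IsPredictor f
  cost_le : calibrationCost S f ≤ ε
  payoff_le : ∀ g, IsPredictor g → calibrationCost S g ≤ ε → payoffEI S U g ≤ payoffEI S U f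

/-- `f` has the least calibration error among the solutions of the principal's problem. This
selection rules out solutions that waste their budget on errors bringing no payoff. -/
structure IsLexOptimal (S : Setup n) (U : ℝ → ℝ) (ε : ℝ) (f : Fin n → ℝ →₀ ℝ) : Prop extends
    IsOptimal S U ε f where
  cost_le_of_payoff_le : ∀ g, IsPredictor g → calibrationCost S g ≤ ε →
    payoffEI S U f ≤ payoffEI S U g → calibrationCost S f ≤ calibrationCost S g

/-- `f` maximizes the Lagrangian in which calibration error is priced at `α` instead of being
capped. -/
def IsLagrangeOptimal (S : Setup n) (U : ℝ → ℝ) (α : ℝ) (f : Fin n → ℝ →₀ ℝ) : Prop :=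
  ∀ g, IsPredictor g →
    payoffEI S U g - α * calibrationCost S g ≤ payoffEI S U f - α * calibrationCost S f

variable {S : Setup n} {U : ℝ → ℝ} {ε : ℝ} {f : Fin n → ℝ →₀ ℝ}

namespace IsOptimal

lemma pool_nonpos (h : IsOptimal S U ε f) {a b c s t : ℝ} (hb : b ∈ suppF f) (hab : a ≠ b)
    (hcb : c ≠ b) (hac : a ≠ c) (hs : s ∈ Set.Icc (0 : ℝ) 1) (ht : t ∈ Set.Icc (0 : ℝ) 1)
    (hmean : s * marginal S f a * (a - b) + t * marginal S f c * (c - b) = 0) :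
    s * marginal S f a * (U b - U a) + t * marginal S f c * (U b - U c) ≤ 0 := by
  have hbI := h.isPredictor.mem_Icc hb
  have hpay := h.payoff_le _ ((h.isPredictor.transfer (a := a) hbI hs).transfer (a := c) hbI ht)
    ((calibrationCost_pool_le hab hcb hac hs ht hmean).trans h.cost_le)
  rw [payoffEI_transfer, payoffEI_transfer, marginal_transfer_of_ne hac.symm hcb] at hpay
  linarith

/- Pooling `p₁` and `p₃` into `p₂` in proportions that average to `p₂` costs no calibration. -/
lemma mul_le_of_lt_of_lt (h : IsOptimal S U ε f) {p₁ p₂ p₃ : ℝ} (h₁ : p₁ ∈ suppF f)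
    (h₂ : p₂ ∈ suppF f) (h₃ : p₃ ∈ suppF f) (h₁₂ : p₁ < p₂) (h₂₃ : p₂ < p₃) :
    (p₃ - p₁) * U p₂ ≤ (p₃ - p₂) * U p₁ + (p₂ - p₁) * U p₃ := by
  have hm₁ := h.isPredictor.marginal_pos S h₁
  have hm₃ := h.isPredictor.marginal_pos S h₃
  have hI₁ := h.isPredictor.mem_Icc h₁
  have hI₃ := h.isPredictor.mem_Icc h₃
  set δ := min (marginal S f p₁) (marginal S f p₃)
  have hδ : 0 < δ := lt_min hm₁ hm₃
  have hfrac : ∀ {m d : ℝ}, 0 < m → δ ≤ m → 0 ≤ d → d ≤ 1 → δ * d / m ∈ Set.Icc (0 : ℝ) 1 :=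
    fun hm hδm hd0 hd1 => ⟨by positivity,
      div_le_one_of_le₀ ((mul_le_of_le_one_right hδ.le hd1).trans hδm) hm.le⟩
  have hs : δ * (p₃ - p₂) / marginal S f p₁ ∈ Set.Icc (0 : ℝ) 1 :=
    hfrac hm₁ (min_le_left _ _) (by linarith) (by linarith [hI₁.1, hI₃.2])
  have ht : δ * (p₂ - p₁) / marginal S f p₃ ∈ Set.Icc (0 : ℝ) 1 :=
    hfrac hm₃ (min_le_right _ _) (by linarith) (by linarith [hI₁.1, hI₃.2])
  have hpool := h.pool_nonpos h₂ h₁₂.ne h₂₃.ne' (h₁₂.trans h₂₃).ne hs ht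
  rw [div_mul_cancel₀ _ hm₁.ne', div_mul_cancel₀ _ hm₃.ne'] at hpool
  have hδU : δ * ((p₃ - p₁) * U p₂) ≤ δ * ((p₃ - p₂) * U p₁ + (p₂ - p₁) * U p₃) := by
    linarith [hpool (by ring)]
  exact le_of_mul_le_mul_left hδU hδ

lemma exists_isLagrangeOptimal (h : IsOptimal S U ε f) :
    ∃ α, 0 ≤ α ∧ (calibrationCost S f ≠ 0 → IsLagrangeOptimal S U α f) := by
  rcases eq_or_ne (calibrationCost S f) 0 with hzero | hne
  · exact ⟨0, le_rfl, fun hne => absurd hzero hne⟩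
  have hnonneg : 0 ≤ calibrationCost S f := Finset.sum_nonneg fun _ _ => abs_nonneg _
  have hε : 0 < ε := (hnonneg.lt_of_ne' hne).trans_le h.cost_le
  have hslater : ∃ g ∈ {g | IsPredictor g}, calibrationCost S g < ε :=
    ⟨fullInfo S, isPredictor_fullInfo S, by rwa [calibrationCost_fullInfo]⟩
  obtain ⟨α, hα, hlag⟩ := exists_lagrange_multiplier (concaveOn_payoffEI S U)
    (convexOn_calibrationCost S) hslater h.cost_le fun g hg => h.payoff_le g hg
  exact ⟨α, hα, fun _ g hg => hlag g hg⟩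

end IsOptimal

namespace IsLexOptimal

/- Moving a little mass from `a` to `b` would lower both errors. -/
lemma lt_of_opposite_gaps (h : IsLexOptimal S U ε f) {σ a b : ℝ} (hσ : |σ| = 1)
    (ha : a ∈ suppF f) (hb : b ∈ suppF f) (hgapa : σ * calibrationGap S f a < 0)
    (hgapb : 0 < σ * calibrationGap S f b) (hab : σ * (a - b) ≤ 0) : U b < U a := by
  by_contra! hU
  have hm := h.isPredictor.marginal_pos S ha
  obtain ⟨s, hs0, hs1, hsb⟩ := exists_pos_le_one_add_mul_nonneg hgapb
    (σ * (calibrationGap S f a + marginal S f a * (a - b)))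
  have hs : s ∈ Set.Icc (0 : ℝ) 1 := ⟨hs0.le, hs1⟩
  have hcost := calibrationCost_transfer_of_sign hσ hs hgapb.le (a := a) (by linarith)
  have hpay := payoffEI_transfer S U f a b s
  have hmove : σ * (s * (calibrationGap S f a + marginal S f a * (a - b))) < 0 := by
    have := mul_nonpos_of_nonneg_of_nonpos hm.le hab
    have := mul_neg_of_pos_of_neg hs0 (by linarith :
      σ * calibrationGap S f a + marginal S f a * (σ * (a - b)) < 0)
    linarith
  have hgain : 0 ≤ s * marginal S f a * (U b - U a) :=
    mul_nonneg (mul_pos hs0 hm).le (sub_nonneg.2 hU)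
  have hsaving : 0 ≤ s * |calibrationGap S f a| := mul_nonneg hs0.le (abs_nonneg _)
  have := h.cost_le_of_payoff_le _ (h.isPredictor.transfer (a := a) (h.isPredictor.mem_Icc hb) hs)
    (by linarith [h.cost_le]) (by linarith)
  linarith

lemma lt_of_gap_pos_of_gap_neg (h : IsLexOptimal S U ε f) {p q : ℝ} (hp : p ∈ suppF f)
    (hq : q ∈ suppF f) (hgapp : 0 < calibrationGap S f p) (hgapq : calibrationGap S f q < 0) :
    p < q := by
  by_contra! hqp
  have hUpq : U p < U q := h.lt_of_opposite_gaps (σ := 1) (by simp) hq hp (by simpa using hgapq)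
    (by simpa using hgapp) (by linarith)
  have hUqp : U q < U p := h.lt_of_opposite_gaps (σ := -1) (by simp) hp hq (by simpa using hgapp)
    (by simpa using hgapq) (by linarith)
  exact hUpq.not_gt hUqp

end IsLexOptimal

namespace IsLagrangeOptimal

variable {α σ a b : ℝ}

lemma sub_le_of_transfer (h : IsLagrangeOptimal S U α f) (hf : IsPredictor f) (hσ : |σ| = 1)
    (ha : a ∈ suppF f) (hb : b ∈ suppF f) (hgapa : 0 ≤ σ * calibrationGap S f a)
    (hgapb : 0 ≤ σ * calibrationGap S f b) {s : ℝ} (hs0 : 0 < s) (hs1 : s ≤ 1)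
    (hs : 0 ≤ σ * calibrationGap S f b + s * (σ * (marginal S f a * (a - b)))) :
    U b - U a ≤ σ * α * (a - b) := by
  have hsI : s ∈ Set.Icc (0 : ℝ) 1 := ⟨hs0.le, hs1⟩
  have hsm := mul_pos hs0 (hf.marginal_pos S ha)
  have habs : |calibrationGap S f a| = σ * calibrationGap S f a := by
    rw [← abs_of_nonneg hgapa, abs_mul, hσ, one_mul]
  have hcost := calibrationCost_transfer_of_sign hσ hsI hgapb (a := a)
    (by linarith [mul_nonneg hs0.le hgapa])
  have hlag := h _ (hf.transfer (a := a) (hf.mem_Icc hb) hsI)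
  rw [payoffEI_transfer, hcost, habs] at hlag
  refine le_of_mul_le_mul_left ?_ hsm
  linarith

/- Both directions of transfer between `p` and `b` keep the signs of the gaps: any amount from `b`
to `p`, a small amount from `p` to `b`. -/
lemma sub_eq_of_gap (h : IsLagrangeOptimal S U α f) (hf : IsPredictor f) (hσ : |σ| = 1) {p : ℝ}
    (hb : b ∈ suppF f) (hp : p ∈ suppF f) (hgapb : 0 < σ * calibrationGap S f b)
    (hgapp : 0 ≤ σ * calibrationGap S f p) (hpb : 0 ≤ σ * (b - p)) :
    U p - U b = σ * α * (b - p) := by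
  obtain ⟨s, hs0, hs1, hs⟩ := exists_pos_le_one_add_mul_nonneg hgapb
    (σ * (marginal S f p * (p - b)))
  have hle := h.sub_le_of_transfer hf hσ hb hp hgapb.le hgapp one_pos le_rfl (by
    linarith [mul_nonneg (hf.marginal_pos S hb).le hpb])
  have hge := h.sub_le_of_transfer hf hσ hp hb hgapp hgapb.le hs0 hs1 hs
  linarith

end IsLagrangeOptimal

end Optimality

section Existence

variable {ι : Type*} {U : ℝ → ℝ}

variable (n ι) in
/-- Predictors presented with a labelled support: label `j` announces `y.1 j`, and is used with
probability `y.2 j i` in event `i`. Different labels may announce the same prediction, which is what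
makes the set compact when there are finitely many labels. -/
def signalSet [Fintype ι] : Set ((ι → ℝ) × (ι → Fin n → ℝ)) :=
  {y | (∀ j, y.1 j ∈ Set.Icc (0 : ℝ) 1) ∧ (∀ j i, y.2 j i ∈ Set.Icc (0 : ℝ) 1) ∧
    ∀ i, ∑ j, y.2 j i = 1}

/-- The expected payoff of a labelled predictor. -/
def signalPayoff [Fintype ι] (S : Setup n) (U : ℝ → ℝ) (y : (ι → ℝ) × (ι → Fin n → ℝ)) : ℝ :=
  ∑ j, (∑ i, S.lam i * y.2 j i) * U (y.1 j)

/-- The calibration gap of a single label of a labelled predictor. -/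
def signalGap (S : Setup n) (y : (ι → ℝ) × (ι → Fin n → ℝ)) (j : ι) : ℝ :=
  ∑ i, S.lam i * y.2 j i * (S.theta i - y.1 j)

/-- The `ℓ_1` calibration error of a labelled predictor, in which labels announcing the same
prediction are not pooled. -/
def signalCost [Fintype ι] (S : Setup n) (y : (ι → ℝ) × (ι → Fin n → ℝ)) : ℝ :=
  ∑ j, |signalGap S y j|

/-- The predictor obtained from a labelled predictor by forgetting the labels. -/
def signalPredictor [Fintype ι] (y : (ι → ℝ) × (ι → Fin n → ℝ)) : Fin n → ℝ →₀ ℝ := fun i =>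
  ∑ j, Finsupp.single (y.1 j) (y.2 j i)

variable [Fintype ι] {y : (ι → ℝ) × (ι → Fin n → ℝ)}

variable (n ι) in
lemma isCompact_signalSet : IsCompact (signalSet n ι) := by
  have hbox : IsCompact ((Set.univ.pi fun _ : ι => Set.Icc (0 : ℝ) 1) ×ˢ
      Set.univ.pi fun _ : ι => Set.univ.pi fun _ : Fin n => Set.Icc (0 : ℝ) 1) :=
    (isCompact_univ_pi fun _ => isCompact_Icc).prod
      (isCompact_univ_pi fun _ => isCompact_univ_pi fun _ => isCompact_Icc)
  have hsum : IsClosed {y : (ι → ℝ) × (ι → Fin n → ℝ) | ∀ i, ∑ j, y.2 j i = 1} := by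
    simp only [Set.ofPred_forall]
    exact isClosed_iInter fun i => isClosed_eq (by fun_prop) continuous_const
  convert hbox.inter_right hsum using 1
  ext y
  simp only [signalSet, Set.mem_ofPred_eq, Set.mem_inter_iff, Set.mem_prod, Set.mem_univ_pi,
    and_assoc]

lemma continuous_signalCost (S : Setup n) : Continuous (signalCost (ι := ι) S) := by
  unfold signalCost signalGap
  fun_prop

lemma upperSemicontinuousOn_signalPayoff (S : Setup n)
    (hU : UpperSemicontinuousOn U (Set.Icc (0 : ℝ) 1)) :
    UpperSemicontinuousOn (signalPayoff S U) (signalSet n ι) := by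
  unfold signalPayoff
  refine upperSemicontinuousOn_sum fun j _ => upperSemicontinuousOn_continuousOn_mul
    (by fun_prop) (fun y hy => ?_) ?_
  · exact Finset.sum_nonneg fun i _ => mul_nonneg (S.lam_pos i).le (hy.2.1 j i).1
  · exact hU.comp (g := fun y : (ι → ℝ) × (ι → Fin n → ℝ) => y.1 j) (by fun_prop)
      fun y hy => hy.1 j

lemma signalPredictor_apply [DecidableEq ℝ] (y : (ι → ℝ) × (ι → Fin n → ℝ)) (i : Fin n) (q : ℝ) :
    signalPredictor y i q = ∑ j with y.1 j = q, y.2 j i := by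
  simp only [signalPredictor, Finsupp.finsetSum_apply, Finsupp.single_apply, Finset.sum_filter]

lemma isPredictor_signalPredictor (hy : y ∈ signalSet n ι) : IsPredictor (signalPredictor y) := by
  intro i
  refine isDist_iff.2 ⟨fun p => ?_, fun p hp => ?_, ?_⟩
  · rw [signalPredictor_apply]
    exact Finset.sum_nonneg fun j _ => (hy.2.1 j i).1
  · have hnot : ∀ j ∈ Finset.univ, ¬y.1 j = p := fun j _ hj => hp (hj ▸ hy.1 j)
    rw [signalPredictor_apply, Finset.filter_false_of_mem hnot, Finset.sum_empty]
  · simpa only [signalPredictor, map_sum, Finsupp.linearCombination_single, smul_eq_mul, mul_one]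
      using hy.2.2 i

lemma payoffEI_signalPredictor (S : Setup n) (U : ℝ → ℝ) (y : (ι → ℝ) × (ι → Fin n → ℝ)) :
    payoffEI S U (signalPredictor y) = signalPayoff S U y := by
  simp only [payoffEI_eq_sum_linearCombination, signalPredictor, map_sum,
    Finsupp.linearCombination_single, smul_eq_mul, Finset.mul_sum, signalPayoff, Finset.sum_mul,
    mul_assoc]
  exact Finset.sum_comm

lemma calibrationGap_signalPredictor [DecidableEq ℝ] (S : Setup n)
    (y : (ι → ℝ) × (ι → Fin n → ℝ)) (q : ℝ) :
    calibrationGap S (signalPredictor y) q = ∑ j with y.1 j = q, signalGap S y j := by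
  simp only [calibrationGap, signalGap, signalPredictor_apply, Finset.mul_sum, Finset.sum_mul]
  rw [Finset.sum_comm]
  refine Finset.sum_congr rfl fun j hj => ?_
  rw [(Finset.mem_filter.1 hj).2]

lemma calibrationCost_signalPredictor_le (S : Setup n) (y : (ι → ℝ) × (ι → Fin n → ℝ)) :
    calibrationCost S (signalPredictor y) ≤ signalCost S y := by
  have hsupp : suppF (signalPredictor y) ⊆ Finset.univ.image y.1 := by
    intro q hq
    obtain ⟨i, hi⟩ := mem_suppF.1 hq
    rw [signalPredictor_apply] at hi
    obtain ⟨j, hj, -⟩ := Finset.exists_ne_zero_of_sum_ne_zero hi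
    exact Finset.mem_image.2 ⟨j, Finset.mem_univ j, (Finset.mem_filter.1 hj).2⟩
  calc calibrationCost S (signalPredictor y)
      = ∑ q ∈ Finset.univ.image y.1, |∑ j with y.1 j = q, signalGap S y j| := by
        simp only [calibrationCost_eq_sum_of_subset S hsupp, calibrationGap_signalPredictor]
    _ ≤ ∑ q ∈ Finset.univ.image y.1, ∑ j with y.1 j = q, |signalGap S y j| :=
        Finset.sum_le_sum fun q _ => Finset.abs_sum_le_sum_abs _ _
    _ = signalCost S y :=
        Finset.sum_fiberwise_of_maps_to (fun j hj => Finset.mem_image_of_mem _ hj) _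

/- Carathéodory's theorem in the space recording the event probabilities, the payoff and the error
of a prediction, so that the number of labels does not depend on the predictor. -/
lemma IsPredictor.exists_signal {f : Fin n → ℝ →₀ ℝ} (hf : IsPredictor f) (S : Setup n)
    (U : ℝ → ℝ) :
    ∃ y ∈ signalSet n (Fin (Module.finrank ℝ ((Fin n → ℝ) × ℝ × ℝ) + 1)),
      signalPayoff S U y = payoffEI S U f ∧ signalCost S y = calibrationCost S f := by
  obtain ⟨r, w, hr, hw, hsum⟩ := exists_fin_sum_smul_eq_sum (hf.suppF_nonempty S)
    fun p => ((fun i => f i p, marginal S f p * U p, |calibrationGap S f p|) :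
      (Fin n → ℝ) × ℝ × ℝ)
  simp only [Prod.ext_iff, funext_iff, Prod.fst_sum, Prod.snd_sum, Finset.sum_apply, Prod.smul_mk,
    Pi.smul_apply, smul_eq_mul, hf.sum_suppF_s5] at hsum
  obtain ⟨hprob, hpayoff, hcost⟩ := hsum
  have hy0 : ∀ j i, 0 ≤ w j * f i (r j) := fun j i => mul_nonneg (hw j) ((hf i).1 _)
  refine ⟨(r, fun j i => w j * f i (r j)), ⟨fun j => hf.mem_Icc (hr j), fun j i => ⟨hy0 j i, ?_⟩,
    hprob⟩, ?_, ?_⟩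
  · rw [← hprob i]
    exact Finset.single_le_sum (f := fun j => w j * f i (r j)) (fun k _ => hy0 k i)
      (Finset.mem_univ j)
  · rw [payoffEI_eq_sum_suppF, ← hpayoff, signalPayoff]
    refine Finset.sum_congr rfl fun j _ => ?_
    simp only [marginal, Finset.mul_sum, Finset.sum_mul]
    exact Finset.sum_congr rfl fun i _ => by ring
  · rw [calibrationCost, ← hcost, signalCost]
    refine Finset.sum_congr rfl fun j _ => ?_
    have hgap : signalGap S (r, fun j i => w j * f i (r j)) j = w j * calibrationGap S f (r j) := by
      rw [calibrationGap, Finset.mul_sum, signalGap]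
      exact Finset.sum_congr rfl fun i _ => by ring
    rw [hgap, abs_mul, abs_of_nonneg (hw j)]

lemma exists_isLexOptimal (S : Setup n) {ε : ℝ} (hε : 0 ≤ ε)
    (hU : UpperSemicontinuousOn U (Set.Icc (0 : ℝ) 1)) : ∃ f, IsLexOptimal S U ε f := by
  set K := signalSet n (Fin (Module.finrank ℝ ((Fin n → ℝ) × ℝ × ℝ) + 1)) ∩
    {y | signalCost S y ≤ ε}
  have hrealize : ∀ g, IsPredictor g → calibrationCost S g ≤ ε →
      ∃ y ∈ K, signalPayoff S U y = payoffEI S U g ∧ signalCost S y = calibrationCost S g := by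
    intro g hg hgε
    obtain ⟨y, hy, hpay, hcost⟩ := hg.exists_signal S U
    exact ⟨y, ⟨hy, hcost.trans_le hgε⟩, hpay, hcost⟩
  have hK : IsCompact K := (isCompact_signalSet _ _).inter_right
    (isClosed_le (continuous_signalCost S) continuous_const)
  obtain ⟨y₀, hy₀, -⟩ := hrealize _ (isPredictor_fullInfo S) (by rwa [calibrationCost_fullInfo])
  obtain ⟨y, hy, hmax, htie⟩ := exists_isMaxOn_forall_le_of_tie hK ⟨y₀, hy₀⟩
    ((upperSemicontinuousOn_signalPayoff S hU).mono Set.inter_subset_left)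
    (continuous_signalCost S).continuousOn
  have hcost := calibrationCost_signalPredictor_le S y
  refine ⟨signalPredictor y, ⟨isPredictor_signalPredictor hy.1, hcost.trans hy.2,
    fun g hg hgε => ?_⟩, fun g hg hgε hpay => ?_⟩
  · obtain ⟨x, hx, hxpay, -⟩ := hrealize g hg hgε
    rw [payoffEI_signalPredictor, ← hxpay]
    exact hmax hx
  · obtain ⟨x, hx, hxpay, hxcost⟩ := hrealize g hg hgε
    rw [payoffEI_signalPredictor, ← hxpay] at hpay
    rw [← hxcost]
    exact hcost.trans (htie x hx hpay)

end Existence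

section Thresholds

variable {S : Setup n} {U : ℝ → ℝ} {ε α : ℝ} {f : Fin n → ℝ →₀ ℝ}

namespace IsLexOptimal

lemma exists_lower_threshold (h : IsLexOptimal S U ε f)
    (hlag : calibrationCost S f ≠ 0 → IsLagrangeOptimal S U α f) :
    ∃ pL, 0 ≤ pL ∧ pL ≤ 1 ∧ (∀ p ∈ suppF f, 0 < calibrationGap S f p → p < pL) ∧
      (∀ p ∈ suppF f, calibrationGap S f p < 0 → pL < p) ∧
      ∀ p ∈ suppF f, ∀ p' ∈ suppF f, p ≤ pL → p' ≤ pL → U p' - U p = -α * (p' - p) := by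
  have hf := h.isPredictor
  obtain ⟨pL, h0, h1, hpos, htail⟩ := exists_threshold_of_forall_lt (suppF f)
    (0 < calibrationGap S f ·) zero_le_one (fun p hp => (hf.mem_Icc hp).1) fun p hp hgap =>
      (hf.mem_Icc hp).2.lt_of_ne fun hp1 => (hp1 ▸ hgap).not_ge (hf.calibrationGap_one_nonpos S)
  refine ⟨pL, h0, h1, hpos, ?_⟩
  rcases htail with hzero | ⟨b, hb, hgapb, hle⟩
  · refine ⟨fun p hp hgap => lt_of_not_ge fun hpL => ?_, fun p hp p' hp' hpL hp'L => ?_⟩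
    · exact (hzero p hp hpL ▸ hgap).not_ge (hf.calibrationGap_zero_nonneg S)
    · rw [hzero p hp hpL, hzero p' hp' hp'L, sub_self, sub_self, mul_zero]
  · have hneg : ∀ p ∈ suppF f, calibrationGap S f p < 0 → pL < p := fun p hp hgap =>
      lt_of_not_ge fun hpL => (h.lt_of_gap_pos_of_gap_neg hb hp hgapb hgap).not_ge (hle p hp hpL)
    have hline : ∀ p ∈ suppF f, p ≤ pL → U p - U b = α * (b - p) := fun p hp hpL => by
      have hgap : 0 ≤ calibrationGap S f p := le_of_not_gt fun hgap => (hneg p hp hgap).not_ge hpL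
      have hopt := hlag (calibrationCost_pos_of_calibrationGap_ne_zero hgapb.ne').ne'
      simpa using hopt.sub_eq_of_gap hf (σ := 1) (by simp) hb hp (by simpa using hgapb)
        (by simpa using hgap) (by simpa using hle p hp hpL)
    refine ⟨hneg, fun p hp p' hp' hpL hp'L => ?_⟩
    linarith [hline p hp hpL, hline p' hp' hp'L]

lemma exists_upper_threshold (h : IsLexOptimal S U ε f)
    (hlag : calibrationCost S f ≠ 0 → IsLagrangeOptimal S U α f) {pL : ℝ} (hpL : pL ≤ 1)
    (hpos : ∀ p ∈ suppF f, 0 < calibrationGap S f p → p < pL)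
    (hneg : ∀ p ∈ suppF f, calibrationGap S f p < 0 → pL < p) :
    ∃ pH, pL ≤ pH ∧ pH ≤ 1 ∧ (∀ p ∈ suppF f, calibrationGap S f p < 0 → pH < p) ∧
      ∀ p ∈ suppF f, ∀ p' ∈ suppF f, pH ≤ p → pH ≤ p' → U p' - U p = α * (p' - p) := by
  have hf := h.isPredictor
  obtain ⟨pH, hL, h1, hneg', htail⟩ := exists_threshold_of_forall_gt (suppF f)
    (calibrationGap S f · < 0) hpL (fun p hp => (hf.mem_Icc hp).2) hneg
  refine ⟨pH, hL, h1, hneg', fun p hp p' hp' hpH hp'H => ?_⟩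
  rcases htail with hone | ⟨b, hb, hgapb, hle⟩
  · rw [hone p hp hpH, hone p' hp' hp'H, sub_self, sub_self, mul_zero]
  · have hline : ∀ p ∈ suppF f, pH ≤ p → U p - U b = α * (p - b) := fun p hp hpH => by
      have hgap : calibrationGap S f p ≤ 0 :=
        le_of_not_gt fun hgap => (hpos p hp hgap).not_ge (hL.trans hpH)
      have hopt := hlag (calibrationCost_pos_of_calibrationGap_ne_zero hgapb.ne).ne'
      have := hopt.sub_eq_of_gap hf (σ := -1) (by simp) hb hp (by simpa using hgapb)
        (by simpa using hgap) (by simpa using hle p hp hpH)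
      linarith
    linarith [hline p hp hpH, hline p' hp' hp'H]

end IsLexOptimal

end Thresholds

theorem statement5_general {n : ℕ} (S : Setup n) (ε : ℝ) (hε : 0 ≤ ε) (U : ℝ → ℝ)
    (hUsc : UpperSemicontinuousOn U (Set.Icc (0 : ℝ) 1)) :
    ∃ (pL pH α : ℝ) (fstar : Fin n → ℝ →₀ ℝ),
      0 ≤ pL ∧ pL ≤ pH ∧ pH ≤ 1 ∧ 0 ≤ α ∧
      IsPredictor fstar ∧ ECE S 1 fstar ≤ ε ∧
      (∀ f : Fin n → ℝ →₀ ℝ, IsPredictor f → ECE S 1 f ≤ ε →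
        payoffEI S U f ≤ payoffEI S U fstar) ∧
      (∀ p ∈ suppF fstar, p ≤ pL → p ≤ kappa S fstar p) ∧
      (∀ p ∈ suppF fstar, pL ≤ p → p ≤ pH → p = kappa S fstar p) ∧
      (∀ p ∈ suppF fstar, pH ≤ p → kappa S fstar p ≤ p) ∧
      (∀ p₁ ∈ suppF fstar, ∀ p₂ ∈ suppF fstar, ∀ p₃ ∈ suppF fstar,
        p₁ < p₂ → p₂ < p₃ →
          (p₃ - p₁) * U p₂ ≤ (p₃ - p₂) * U p₁ + (p₂ - p₁) * U p₃) ∧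
      (∀ p ∈ suppF fstar, ∀ p' ∈ suppF fstar, pH ≤ p → pH ≤ p' →
        U p' - U p = α * (p' - p)) ∧
      (∀ p ∈ suppF fstar, ∀ p' ∈ suppF fstar, p ≤ pL → p' ≤ pL →
        U p' - U p = -α * (p' - p)) := by
  obtain ⟨f, hopt⟩ := exists_isLexOptimal S hε hUsc
  obtain ⟨α, hα, hlag⟩ := hopt.exists_isLagrangeOptimal
  obtain ⟨pL, h0, hL1, hpos, hneg, hlower⟩ := hopt.exists_lower_threshold hlag
  obtain ⟨pH, hLH, hH1, hneg', hupper⟩ := hopt.exists_upper_threshold hlag hL1 hpos hneg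
  have hf := hopt.isPredictor
  have hle_kappa : ∀ p ∈ suppF f, p ≤ pH → p ≤ kappa S f p := fun p hp hpH =>
    hf.le_kappa hp (le_of_not_gt fun hgap => (hneg' p hp hgap).not_ge hpH)
  have hkappa_le : ∀ p ∈ suppF f, pL ≤ p → kappa S f p ≤ p := fun p hp hpL =>
    hf.kappa_le hp (le_of_not_gt fun hgap => (hpos p hp hgap).not_ge hpL)
  exact ⟨pL, pH, α, f, h0, hLH, hH1, hα, hf,
    (hf.ECE_one_eq_calibrationCost S).trans_le hopt.cost_le,
    fun g hg hgε => hopt.payoff_le g hg ((hg.ECE_one_eq_calibrationCost S).symm.trans_le hgε),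
    fun p hp hpL => hle_kappa p hp (hpL.trans hLH),
    fun p hp hpL hpH => (hle_kappa p hp hpH).antisymm (hkappa_le p hp hpL),
    fun p hp hpH => hkappa_le p hp (hLH.trans hpH),
    fun _ h₁ _ h₂ _ h₃ h₁₂ h₂₃ => hopt.mul_le_of_lt_of_lt h₁ h₂ h₃ h₁₂ h₂₃, hupper, hlower⟩

/-- Structure of the optimal `(ε, ℓ_1)`-calibrated predictor in the
event-independent setting: there are thresholds `p_L ≤ p_H`, a slope `α ≥ 0`, and an
optimal predictor that is under-confident on `[0, p_L]`, perfectly calibrated on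
`[p_L, p_H]`, over-confident on `[p_H, 1]`, whose support points lie on a convex
function, collinear with slope `α` on `[p_H, 1]` and slope `-α` on `[0, p_L]`. -/
theorem statement5 {n : ℕ} (S : Setup n) (ε : ℝ) (hε : 0 ≤ ε)
    (U : ℝ → ℝ) (hU0 : ∀ p ∈ Set.Icc (0 : ℝ) 1, 0 ≤ U p)
    (hUsc : UpperSemicontinuousOn U (Set.Icc (0 : ℝ) 1)) :
    ∃ (pL pH α : ℝ) (fstar : Fin n → ℝ →₀ ℝ),
      0 ≤ pL ∧ pL ≤ pH ∧ pH ≤ 1 ∧ 0 ≤ α ∧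
      IsPredictor fstar ∧ ECE S 1 fstar ≤ ε ∧
      (∀ f : Fin n → ℝ →₀ ℝ, IsPredictor f → ECE S 1 f ≤ ε →
        payoffEI S U f ≤ payoffEI S U fstar) ∧
      (∀ p ∈ suppF fstar, p ≤ pL → p ≤ kappa S fstar p) ∧
      (∀ p ∈ suppF fstar, pL ≤ p → p ≤ pH → p = kappa S fstar p) ∧
      (∀ p ∈ suppF fstar, pH ≤ p → kappa S fstar p ≤ p) ∧
      (∀ p₁ ∈ suppF fstar, ∀ p₂ ∈ suppF fstar, ∀ p₃ ∈ suppF fstar,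
        p₁ < p₂ → p₂ < p₃ →
          (p₃ - p₁) * U p₂ ≤ (p₃ - p₂) * U p₁ + (p₂ - p₁) * U p₃) ∧
      (∀ p ∈ suppF fstar, ∀ p' ∈ suppF fstar, pH ≤ p → pH ≤ p' →
        U p' - U p = α * (p' - p)) ∧
      (∀ p ∈ suppF fstar, ∀ p' ∈ suppF fstar, p ≤ pL → p' ≤ pL →
        U p' - U p = -α * (p' - p)) :=
  statement5_general S ε hε U hUsc

end PersuasiveCalibration
end
end
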